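/- arXiv:2403.13584 — 2 statements merged into one kernel-verified Lean document; each statement's English description precedes it below -/
import Mathlib

section
/- Let ρ and σ be density operators on a finite-dimensional complex Hilbert space with supp(ρ) ⊆ supp(σ) and ρσ ≠ σρ. Then for every α ∈ (1/2, 1) ∪ (1, ∞), the inequality between the measured and sandwiched Rényi divergences is strict: D_α^𝕄(ρ‖σ) < D_α^*(ρ‖σ). -/
open Matrix
open scoped ComplexOrder Kronecker

noncomputable section

/-- Real power of a Hermitian matrix via functional calculus on its support
(Moore–Penrose convention); junk value `0` for non-Hermitian input. -/
def Matrix.rpowH {ι : Type*} [Fintype ι] [DecidableEq ι] (A : Matrix ι ι ℂ) (p : ℝ) :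
    Matrix ι ι ℂ :=
  if hA : A.IsHermitian then
    (hA.eigenvectorUnitary : Matrix ι ι ℂ) *
      Matrix.diagonal (fun i => ((hA.eigenvalues i ^ p : ℝ) : ℂ)) *
      star (hA.eigenvectorUnitary : Matrix ι ι ℂ)
  else 0

/-- Real part of the trace. -/
def retr {ι : Type*} [Fintype ι] (A : Matrix ι ι ℂ) : ℝ :=
  (Matrix.trace A).re

open scoped Classical in
/-- Classical Rényi divergence of order `α` of two (finitely supported) probability
mass functions, with value `+∞` when `α > 1` and absolute continuity fails. -/
def renyiDivE (α : ℝ) {k : ℕ} (p q : Fin k → ℝ) : EReal :=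
  if α < 1 ∨ ∀ i, q i = 0 → p i = 0 then
    (((α - 1)⁻¹ * Real.log (∑ i, p i ^ α * q i ^ (1 - α)) : ℝ) : EReal)
  else (⊤ : EReal)

/-- Measured Rényi divergence: supremum of classical Rényi divergences of the outcome
distributions over all finite POVMs. -/
def measuredRenyiDiv {ι : Type*} [Fintype ι] [DecidableEq ι]
    (α : ℝ) (ρ σ : Matrix ι ι ℂ) : EReal :=
  ⨆ (k : ℕ) (P : Fin k → Matrix ι ι ℂ) (_ : ∀ i, (P i).PosSemidef) (_ : ∑ i, P i = 1),
    renyiDivE α (fun i => retr (ρ * P i)) (fun i => retr (σ * P i))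

/-- Sandwiched Rényi divergence
`D_α^*(ρ‖σ) = (α-1)⁻¹ log Tr[(σ^{(1-α)/(2α)} ρ σ^{(1-α)/(2α)})^α]`. -/
def sandwichedRenyiDiv {ι : Type*} [Fintype ι] [DecidableEq ι]
    (α : ℝ) (ρ σ : Matrix ι ι ℂ) : ℝ :=
  (α - 1)⁻¹ * Real.log (retr (Matrix.rpowH
    (Matrix.rpowH σ ((1 - α) / (2 * α)) * ρ * Matrix.rpowH σ ((1 - α) / (2 * α))) α))

/-!
Put `s = (α - 1) / α` and `X = σ^{-s/2} ρ σ^{-s/2}`. For a POVM with Naimark isometry `V`, outcome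
distributions `p`, `q` and the diagonal weight `W` with entries `(p k / q k) ^ α`, the entire family
`F z = W^{z/2} V σ^{z/2} X^{α(1-z)/2}` is bounded in squared Frobenius norm by `Tr X^α` on the line
`re z = 0` and by the classical Rényi sum on `re z = 1`, and `‖F s‖²` is again the Rényi sum. The
maximum principle on the strip, at `s` if `α > 1` and at `-s` if `1 / 2 < α < 1`, compares the two
quantities. In the case of equality `F` is constant, because the Frobenius norm is strictly convex;
then `V X^{α/2} = W^{1/2} V σ^{1/2}`, which makes `X^{α/2} σ^{1/2}` Hermitian, so `X` and `σ`
commute, and hence so do `ρ` and `σ`.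

Strictness survives the supremum because an optimal POVM exists: the Rényi sum is continuous and
positively homogeneous in the POVM elements, so by Carathéodory's theorem it is maximised over
convex combinations of boundedly many points of the compact set of matrices with prescribed trace.
-/

section MaximumPrinciple

open Complex Filter Asymptotics

variable {E : Type*} [NormedAddCommGroup E] [NormedSpace ℂ E] {f : ℂ → E} {M t : ℝ}

theorem norm_le_on_strip_of_isBigO_one (hf : Differentiable ℂ f)
    (hbdd : f =O[𝓟 (re ⁻¹' Set.Icc 0 1)] fun _ => (1 : ℝ))
    (h0 : ∀ z : ℂ, z.re = 0 → ‖f z‖ ≤ M) (h1 : ∀ z : ℂ, z.re = 1 → ‖f z‖ ≤ M)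
    {z : ℂ} (hz : z.re ∈ Set.Icc 0 1) : ‖f z‖ ≤ M := by
  refine PhragmenLindelof.vertical_strip hf.diffContOnCl
    ⟨0, by simp [Real.pi_pos], 0, ?_⟩ h0 h1 hz.1 hz.2
  simpa using hbdd.mono (inf_le_right.trans
    (principal_mono.2 (Set.preimage_mono Set.Ioo_subset_Icc_self)))

theorem eq_of_norm_le_norm_strip_interior [StrictConvexSpace ℝ E] (hf : Differentiable ℂ f)
    (hbdd : f =O[𝓟 (re ⁻¹' Set.Icc 0 1)] fun _ => (1 : ℝ)) (ht : t ∈ Set.Ioo (0 : ℝ) 1)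
    (h0 : ∀ z : ℂ, z.re = 0 → ‖f z‖ ≤ ‖f t‖) (h1 : ∀ z : ℂ, z.re = 1 → ‖f z‖ ≤ ‖f t‖)
    {z : ℂ} (hz : z.re ∈ Set.Icc 0 1) : f z = f t := by
  have hconvex : Convex ℝ (re ⁻¹' Set.Ioo 0 1) :=
    (convex_Ioo 0 1).is_linear_preimage reLm.isLinear
  refine eqOn_closure_of_isPreconnected_of_isMaxOn_norm hconvex.isPreconnected
    (isOpen_Ioo.preimage continuous_re) hf.diffContOnCl (c := (t : ℂ)) (by simpa using ht)
    (fun z hz => norm_le_on_strip_of_isBigO_one hf hbdd h0 h1 (Set.Ioo_subset_Icc_self hz)) ?_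
  rwa [closure_preimage_re, closure_Ioo zero_ne_one]

end MaximumPrinciple

section FrobeniusInner

open scoped Matrix.Norms.Frobenius

variable {m n : Type*} [Fintype m] [Fintype n]

/-- The Hilbert–Schmidt inner product `Tr(Aᴴ B)`, whose norm is the Frobenius norm. -/
local instance frobeniusInnerProductSpace : InnerProductSpace ℂ (Matrix m n ℂ) where
  inner A B := (Aᴴ * B).trace
  norm_sq_eq_re_inner A := by
    rw [Matrix.frobenius_norm_def, ← Real.sqrt_eq_rpow, Real.sq_sqrt (by positivity)]
    simp [Matrix.trace, Matrix.mul_apply, Finset.sum_comm (γ := m), Complex.sq_norm,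
      Complex.normSq_apply]
  conj_inner_symm A B := by
    simp only [starRingEnd_apply, ← Matrix.trace_conjTranspose, Matrix.conjTranspose_mul,
      Matrix.conjTranspose_conjTranspose]
  add_left A B C := by simp [Matrix.add_mul]
  smul_left A B c := by simp

theorem frobenius_norm_sq (A : Matrix m n ℂ) : ‖A‖ ^ 2 = retr (Aᴴ * A) :=
  norm_sq_eq_re_inner (𝕜 := ℂ) A

theorem frobenius_norm_sq' (A : Matrix m n ℂ) : ‖A‖ ^ 2 = retr (A * Aᴴ) := by
  rw [frobenius_norm_sq, retr, trace_mul_comm, ← retr]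

theorem retr_conjTranspose_mul_le (A B : Matrix m n ℂ) : retr (Aᴴ * B) ≤ ‖A‖ * ‖B‖ :=
  re_inner_le_norm (𝕜 := ℂ) A B

theorem frobenius_strictConvexSpace : StrictConvexSpace ℝ (Matrix m n ℂ) := by
  let := InnerProductSpace.rclikeToReal ℂ (Matrix m n ℂ)
  infer_instance

end FrobeniusInner

section SuppCPow

open Complex Filter Asymptotics

/-- The complex power `x ^ z` taken on the support: `0` when `x ≤ 0`, for every exponent `z`,
including `z = 0`. -/
def suppCPow (x : ℝ) (z : ℂ) : ℂ := if 0 < x then (x : ℂ) ^ z else 0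

theorem suppCPow_add (x : ℝ) (z w : ℂ) : suppCPow x (z + w) = suppCPow x z * suppCPow x w := by
  unfold suppCPow
  split_ifs with hx
  · exact cpow_add _ _ (ofReal_ne_zero.2 hx.ne')
  · simp

theorem star_suppCPow (x : ℝ) (z : ℂ) : star (suppCPow x z) = suppCPow x (star z) := by
  unfold suppCPow
  split_ifs with hx
  · have harg : (x : ℂ).arg ≠ Real.pi := by simp [arg_ofReal_of_nonneg hx.le, Real.pi_ne_zero.symm]
    simpa using (cpow_conj (x : ℂ) z harg).symm
  · simp

theorem suppCPow_ofReal {x p : ℝ} (hx : 0 ≤ x) (hp : p ≠ 0) :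
    suppCPow x p = ((x ^ p : ℝ) : ℂ) := by
  unfold suppCPow
  split_ifs with hx'
  · rw [ofReal_cpow hx]
  · rw [le_antisymm (not_lt.1 hx') hx, Real.zero_rpow hp, ofReal_zero]

theorem suppCPow_eq_zero_iff {x : ℝ} {z : ℂ} : suppCPow x z = 0 ↔ x ≤ 0 := by
  unfold suppCPow
  split_ifs with hx
  · simp [cpow_eq_zero_iff, hx.ne', hx]
  · simpa using hx

theorem suppCPow_congr {x y c : ℝ} (hc : c ≠ 0) (h : suppCPow x c = suppCPow y c) (z : ℂ) :
    suppCPow x z = suppCPow y z := by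
  rcases le_or_gt x 0 with hx | hx
  · have hy : y ≤ 0 := suppCPow_eq_zero_iff.1 (h ▸ suppCPow_eq_zero_iff.2 hx)
    rw [suppCPow_eq_zero_iff.2 hx, suppCPow_eq_zero_iff.2 hy]
  · have hy : 0 < y := not_le.1 fun hy => hx.not_ge <|
      suppCPow_eq_zero_iff.1 (h.trans (suppCPow_eq_zero_iff.2 hy))
    rw [suppCPow_ofReal hx.le hc, suppCPow_ofReal hy.le hc, ofReal_inj] at h
    rw [(Real.rpow_left_inj hx.le hy.le hc).1 h]

@[fun_prop]
theorem differentiable_suppCPow (x : ℝ) : Differentiable ℂ (suppCPow x) := by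
  intro z
  unfold suppCPow
  split_ifs with hx
  · exact (differentiableAt_id.const_cpow (Or.inl (ofReal_ne_zero.2 hx.ne')))
  · exact differentiableAt_const _

theorem suppCPow_isBigO_one_strip (x a b : ℝ) :
    (fun z : ℂ => suppCPow x (a * z + b)) =O[𝓟 (re ⁻¹' Set.Icc 0 1)] fun _ => (1 : ℝ) := by
  unfold suppCPow
  split_ifs with hx
  · have hcont : ContinuousOn (fun r : ℝ => x ^ (a * r + b)) (Set.Icc 0 1) := by
      fun_prop (disch := simp [hx.ne'])
    obtain ⟨C, hC⟩ := isCompact_Icc.exists_bound_of_continuousOn hcont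
    refine IsBigO.of_bound C (eventually_principal.2 fun z hz => ?_)
    simpa [norm_cpow_eq_rpow_re_of_pos hx, abs_of_pos (Real.rpow_pos_of_pos hx _)] using hC z.re hz
  · exact isBigO_zero _ _

end SuppCPow

/-- A real spectral decomposition `U diag(x) U⁻¹`: a unitary matrix and one eigenvalue per column.
Its powers below only see the positive eigenvalues. -/
structure SpectralData (n : Type*) [Fintype n] [DecidableEq n] where
  /-- The unitary matrix of eigenvectors. -/
  eigenbasis : Matrix.unitaryGroup n ℂ
  /-- The eigenvalue belonging to each column of `eigenbasis`. -/
  eigenvalue : n → ℝ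

namespace SpectralData

open Filter Asymptotics

variable {n : Type*} [Fintype n] [DecidableEq n]

/-- The complex power of a spectral decomposition, taken on the support; `T.pow 0` is the
projection onto the support. -/
def pow (T : SpectralData n) (z : ℂ) : Matrix n n ℂ :=
  Unitary.conjStarAlgAut ℂ (Matrix n n ℂ) T.eigenbasis
    (diagonal fun i => suppCPow (T.eigenvalue i) z)

/-- The eigendecomposition of a Hermitian matrix. -/
def ofIsHermitian {A : Matrix n n ℂ} (hA : A.IsHermitian) : SpectralData n :=
  ⟨hA.eigenvectorUnitary, hA.eigenvalues⟩

/-- The eigendecomposition of a diagonal matrix in the standard basis. -/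
def ofDiagonal (x : n → ℝ) : SpectralData n := ⟨1, x⟩

theorem ofDiagonal_pow (x : n → ℝ) (z : ℂ) :
    (ofDiagonal x).pow z = diagonal fun i => suppCPow (x i) z := by
  simp [pow, ofDiagonal]

theorem ofIsHermitian_pow_ofReal {A : Matrix n n ℂ} (hA : A.PosSemidef) {p : ℝ} (hp : p ≠ 0) :
    (ofIsHermitian hA.isHermitian).pow p = A.rpowH p := by
  simp only [pow, ofIsHermitian, Matrix.rpowH, dif_pos hA.isHermitian,
    suppCPow_ofReal (hA.eigenvalues_nonneg _) hp, Unitary.conjStarAlgAut_apply]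

theorem ofIsHermitian_pow_one {A : Matrix n n ℂ} (hA : A.PosSemidef) :
    (ofIsHermitian hA.isHermitian).pow 1 = A := by
  have hpow (i : n) : suppCPow (hA.isHermitian.eigenvalues i) 1 = hA.isHermitian.eigenvalues i := by
    simpa using suppCPow_ofReal (hA.eigenvalues_nonneg i) one_ne_zero
  simp only [pow, ofIsHermitian, hpow]
  exact hA.isHermitian.spectral_theorem.symm

variable (T : SpectralData n)

theorem pow_mul_pow (z w : ℂ) : T.pow z * T.pow w = T.pow (z + w) := by
  simp only [pow, ← map_mul, diagonal_mul_diagonal, suppCPow_add]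

theorem commute_pow_pow (z w : ℂ) : Commute (T.pow z) (T.pow w) := by
  rw [Commute, SemiconjBy, pow_mul_pow, pow_mul_pow, add_comm]

theorem pow_mul_pow_mul {m : Type*} (z w : ℂ) (A : Matrix n m ℂ) :
    T.pow z * (T.pow w * A) = T.pow (z + w) * A := by
  rw [← Matrix.mul_assoc, pow_mul_pow]

theorem conjTranspose_pow (z : ℂ) : (T.pow z)ᴴ = T.pow (star z) := by
  simp only [pow, ← star_eq_conjTranspose, ← map_star]
  simp only [star_eq_conjTranspose, diagonal_conjTranspose, ← star_suppCPow]
  rfl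

theorem isHermitian_pow_ofReal (r : ℝ) : (T.pow r).IsHermitian := by
  simp [Matrix.IsHermitian, conjTranspose_pow]

theorem commute_pow {c : ℝ} (hc : c ≠ 0) {B : Matrix n n ℂ} (h : Commute (T.pow c) B) (z : ℂ) :
    Commute (T.pow z) B := by
  let φ := Unitary.conjStarAlgAut ℂ (Matrix n n ℂ) T.eigenbasis
  obtain ⟨C, rfl⟩ : ∃ C, φ C = B := φ.surjective B
  have hC : Commute (diagonal fun i => suppCPow (T.eigenvalue i) c) C :=
    φ.injective ((map_mul φ _ _).trans (h.eq.trans (map_mul φ _ _).symm))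
  suffices Commute (diagonal fun i => suppCPow (T.eigenvalue i) z) C from this.map φ
  ext i j
  have hij := congrFun (congrFun hC.eq i) j
  simp only [diagonal_mul, mul_diagonal, mul_comm (C i j), mul_eq_mul_right_iff] at hij ⊢
  exact hij.imp_left (suppCPow_congr hc · z)

/-- The rank-one projection onto the `i`-th eigenvector. -/
def eigenprojection (i : n) : Matrix n n ℂ :=
  Unitary.conjStarAlgAut ℂ (Matrix n n ℂ) T.eigenbasis (Matrix.single i i 1)

theorem pow_eq_sum (z : ℂ) :
    T.pow z = ∑ i, suppCPow (T.eigenvalue i) z • T.eigenprojection i := by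
  have hdiag : (diagonal fun i => suppCPow (T.eigenvalue i) z) =
      ∑ i, suppCPow (T.eigenvalue i) z • Matrix.single i i (1 : ℂ) := by
    simp [Matrix.smul_single, Matrix.sum_single_eq_diagonal]
  rw [pow, hdiag, map_sum]
  simp only [map_smul, eigenprojection]

end SpectralData

section Isometry

open scoped Matrix.Norms.Frobenius

variable {l m n : Type*} [Fintype l] [Fintype m] [Fintype n]

theorem commute_of_isometry_mul_eq [DecidableEq n] {V : Matrix m n ℂ} (hV : Vᴴ * V = 1)
    {H : Matrix m m ℂ} {A B : Matrix n n ℂ}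
    (hH : H.IsHermitian) (hA : A.IsHermitian) (hB : B.IsHermitian) (h : V * A = H * (V * B)) :
    Commute A B := by
  have hleft : A = Vᴴ * H * V * B := by
    rw [Matrix.mul_assoc, Matrix.mul_assoc, ← h, ← Matrix.mul_assoc, hV, Matrix.one_mul]
  have hright : A = B * (Vᴴ * H * V) := by
    simpa [hA.eq, hB.eq, hH.eq, Matrix.mul_assoc] using congrArg conjTranspose hleft
  calc A * B = B * (Vᴴ * H * V) * B := by rw [← hright]
    _ = B * A := by rw [Matrix.mul_assoc, ← hleft]

theorem frobenius_norm_isometry_mul [DecidableEq n] {V : Matrix m n ℂ} (hV : Vᴴ * V = 1)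
    (A : Matrix n l ℂ) : ‖V * A‖ = ‖A‖ := by
  rw [← sq_eq_sq₀ (norm_nonneg _) (norm_nonneg _), frobenius_norm_sq, frobenius_norm_sq,
    conjTranspose_mul, Matrix.mul_assoc, ← Matrix.mul_assoc Vᴴ, hV, Matrix.one_mul]

theorem frobenius_norm_sq_projection_add {P : Matrix m m ℂ} (hP : IsStarProjection P)
    (A : Matrix m l ℂ) : ‖P * A‖ ^ 2 + ‖A - P * A‖ ^ 2 = ‖A‖ ^ 2 := by
  have hherm : Pᴴ = P := hP.isSelfAdjoint
  have hidem : P * (P * A) = P * A := by rw [← Matrix.mul_assoc, hP.isIdempotentElem.eq]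
  simp only [frobenius_norm_sq, conjTranspose_sub, conjTranspose_mul, hherm, Matrix.sub_mul,
    Matrix.mul_sub, Matrix.mul_assoc, hidem, sub_self, sub_zero, retr, trace_sub, Complex.sub_re]
  ring

end Isometry

namespace SpectralData

open scoped Matrix.Norms.Frobenius

variable {m n : Type*} [Fintype m] [Fintype n] [DecidableEq n] (T : SpectralData n)

theorem isStarProjection_pow_zero : IsStarProjection (T.pow 0) where
  isIdempotentElem := by rw [IsIdempotentElem, pow_mul_pow, add_zero]
  isSelfAdjoint := by
    rw [IsSelfAdjoint, star_eq_conjTranspose, conjTranspose_pow, star_zero]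

theorem frobenius_norm_sq_pow_mul (z : ℂ) (A : Matrix n m ℂ) :
    ‖T.pow z * A‖ ^ 2 = retr (T.pow (2 * z.re : ℝ) * (A * Aᴴ)) := by
  have hexp : star z + z = (2 * z.re : ℝ) := by
    rw [add_comm]
    exact Complex.add_conj z
  rw [frobenius_norm_sq, conjTranspose_mul, Matrix.mul_assoc, conjTranspose_pow, pow_mul_pow_mul,
    hexp, retr, trace_mul_comm, Matrix.mul_assoc, ← retr]

theorem frobenius_norm_pow_mul (z : ℂ) (A : Matrix n m ℂ) : ‖T.pow z * A‖ = ‖T.pow z.re * A‖ := by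
  rw [← sq_eq_sq₀ (norm_nonneg _) (norm_nonneg _), frobenius_norm_sq_pow_mul,
    frobenius_norm_sq_pow_mul, Complex.ofReal_re]

theorem frobenius_norm_mul_pow (z : ℂ) (A : Matrix m n ℂ) : ‖A * T.pow z‖ = ‖A * T.pow z.re‖ := by
  rw [← frobenius_norm_conjTranspose (A * _), ← frobenius_norm_conjTranspose (A * T.pow z.re)]
  simpa [conjTranspose_pow] using T.frobenius_norm_pow_mul (star z) Aᴴ

theorem frobenius_norm_pow_mul_le {z : ℂ} (hz : z.re = 0) (A : Matrix n m ℂ) :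
    ‖T.pow z * A‖ ≤ ‖A‖ := by
  rw [frobenius_norm_pow_mul, hz, Complex.ofReal_zero, ← sq_le_sq₀ (norm_nonneg _) (norm_nonneg _)]
  linarith [frobenius_norm_sq_projection_add T.isStarProjection_pow_zero A,
    sq_nonneg ‖A - T.pow 0 * A‖]

theorem frobenius_norm_mul_pow_le {z : ℂ} (hz : z.re = 0) (A : Matrix m n ℂ) :
    ‖A * T.pow z‖ ≤ ‖A‖ := by
  rw [← frobenius_norm_conjTranspose (A * _), ← frobenius_norm_conjTranspose A,
    conjTranspose_mul, conjTranspose_pow]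
  exact T.frobenius_norm_pow_mul_le (by simpa using hz) Aᴴ

theorem pow_zero_mul_eq_of_norm_le {A : Matrix n m ℂ} (h : ‖A‖ ≤ ‖T.pow 0 * A‖) :
    T.pow 0 * A = A := by
  have hpyth := frobenius_norm_sq_projection_add T.isStarProjection_pow_zero A
  have hsq : ‖A‖ ^ 2 ≤ ‖T.pow 0 * A‖ ^ 2 := by gcongr
  have hzero : ‖A - T.pow 0 * A‖ = 0 := pow_eq_zero_iff two_ne_zero |>.1 <|
    le_antisymm (by linarith) (sq_nonneg _)
  exact (sub_eq_zero.1 (norm_eq_zero.1 hzero)).symm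

theorem mul_pow_zero_eq_of_norm_le {A : Matrix m n ℂ} (h : ‖A‖ ≤ ‖A * T.pow 0‖) :
    A * T.pow 0 = A := by
  rw [← frobenius_norm_conjTranspose A, ← frobenius_norm_conjTranspose (A * _),
    conjTranspose_mul, conjTranspose_pow, star_zero] at h
  have hadj := congrArg conjTranspose (T.pow_zero_mul_eq_of_norm_le h)
  rwa [conjTranspose_mul, conjTranspose_conjTranspose, conjTranspose_pow, star_zero] at hadj

end SpectralData

section Interpolation

open scoped Matrix.Norms.Frobenius
open Complex Filter Asymptotics

variable {m n : Type*} [Fintype m] [DecidableEq m] [Fintype n] [DecidableEq n]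

/-- The interpolating family `W^{z/2} V S^{z/2} T^{α(1-z)/2}`, entire in `z`. -/
def interpolation (W : SpectralData m) (V : Matrix m n ℂ) (S T : SpectralData n) (α : ℝ) (z : ℂ) :
    Matrix m n ℂ :=
  W.pow (z / 2) * (V * (S.pow (z / 2) * T.pow (α * (1 - z) / 2)))

variable (W : SpectralData m) {V : Matrix m n ℂ} (S T : SpectralData n) (α : ℝ)

section

variable (V)

theorem interpolation_eq_sum (z : ℂ) :
    interpolation W V S T α z = ∑ k, ∑ j, ∑ i, (suppCPow (T.eigenvalue k) (α * (1 - z) / 2) *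
      suppCPow (S.eigenvalue j) (z / 2) * suppCPow (W.eigenvalue i) (z / 2)) •
        (W.eigenprojection i * (V * (S.eigenprojection j * T.eigenprojection k))) := by
  simp only [interpolation, SpectralData.pow_eq_sum, Matrix.sum_mul, Matrix.mul_sum,
    Matrix.smul_mul, Matrix.mul_smul, Finset.smul_sum, smul_smul]

theorem differentiable_interpolation : Differentiable ℂ (interpolation W V S T α) := by
  rw [funext (interpolation_eq_sum W V S T α)]
  fun_prop

theorem interpolation_isBigO_one_strip :
    interpolation W V S T α =O[𝓟 (re ⁻¹' Set.Icc 0 1)] fun _ => (1 : ℝ) := by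
  have hhalf (x : ℝ) :
      (fun z => suppCPow x (z / 2)) =O[𝓟 (re ⁻¹' Set.Icc 0 1)] fun _ => (1 : ℝ) := by
    simpa [div_eq_inv_mul] using suppCPow_isBigO_one_strip x (1 / 2) 0
  have haffine (x : ℝ) : (fun z => suppCPow x (α * (1 - z) / 2)) =O[𝓟 (re ⁻¹' Set.Icc 0 1)]
      fun _ => (1 : ℝ) := by
    refine (suppCPow_isBigO_one_strip x (-α / 2) (α / 2)).congr_left fun z => ?_
    push_cast
    ring_nf
  rw [funext (interpolation_eq_sum W V S T α)]
  refine IsBigO.fun_sum fun k _ => IsBigO.fun_sum fun j _ => IsBigO.fun_sum fun i _ => ?_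
  have hconst : (fun _ : ℂ => W.eigenprojection i * (V * (S.eigenprojection j *
      T.eigenprojection k))) =O[𝓟 (re ⁻¹' Set.Icc 0 1)] fun _ => (1 : ℝ) :=
    isBigO_const_const _ one_ne_zero _
  simpa using (((haffine _).mul (hhalf _)).mul (hhalf _)).smul hconst

end

variable {α}

theorem norm_interpolation_le_of_re_eq_zero (hV : Vᴴ * V = 1) {z : ℂ} (hz : z.re = 0) :
    ‖interpolation W V S T α z‖ ≤ ‖T.pow (α / 2 : ℝ)‖ := by
  have hre : (z / 2).re = 0 := by simp [hz]
  have hexp : (α * (1 - z) / 2).re = α / 2 := by simp [hz]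
  calc ‖interpolation W V S T α z‖
      ≤ ‖V * (S.pow (z / 2) * T.pow (α * (1 - z) / 2))‖ := W.frobenius_norm_pow_mul_le hre _
    _ = ‖S.pow (z / 2) * T.pow (α * (1 - z) / 2)‖ := frobenius_norm_isometry_mul hV _
    _ ≤ ‖T.pow (α * (1 - z) / 2)‖ := S.frobenius_norm_pow_mul_le hre _
    _ = ‖T.pow (α / 2 : ℝ)‖ := by
      rw [← Matrix.mul_one (T.pow (α * (1 - z) / 2)), T.frobenius_norm_pow_mul, hexp,
        Matrix.mul_one]

theorem norm_interpolation_le_of_re_eq_one {z : ℂ} (hz : z.re = 1) :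
    ‖interpolation W V S T α z‖ ≤ ‖W.pow (1 / 2 : ℝ) * (V * S.pow (1 / 2 : ℝ))‖ := by
  have hre : (z / 2).re = 1 / 2 := by simp [hz]
  have hexp : (α * (1 - z) / 2).re = 0 := by simp [hz]
  calc ‖interpolation W V S T α z‖
      = ‖W.pow (z / 2) * (V * S.pow (z / 2)) * T.pow (α * (1 - z) / 2)‖ := by
        simp only [interpolation, Matrix.mul_assoc]
    _ ≤ ‖W.pow (z / 2) * (V * S.pow (z / 2))‖ := T.frobenius_norm_mul_pow_le hexp _
    _ = ‖W.pow (1 / 2 : ℝ) * (V * S.pow (z / 2))‖ := by rw [W.frobenius_norm_pow_mul, hre]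
    _ = ‖W.pow (1 / 2 : ℝ) * (V * S.pow (1 / 2 : ℝ))‖ := by
      rw [← Matrix.mul_assoc, S.frobenius_norm_mul_pow, hre, Matrix.mul_assoc]

theorem isometry_mul_pow_eq_of_norm_le_norm_interpolation (hV : Vᴴ * V = 1) {t : ℝ}
    (ht : t ∈ Set.Ioo (0 : ℝ) 1)
    (h0 : ‖T.pow (α / 2 : ℝ)‖ ≤ ‖interpolation W V S T α t‖)
    (h1 : ‖W.pow (1 / 2 : ℝ) * (V * S.pow (1 / 2 : ℝ))‖ ≤ ‖interpolation W V S T α t‖) :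
    V * T.pow (α / 2 : ℝ) = W.pow (1 / 2 : ℝ) * (V * S.pow (1 / 2 : ℝ)) := by
  have := frobenius_strictConvexSpace (m := m) (n := n)
  have hconst {z : ℂ} (hz : z.re ∈ Set.Icc 0 1) :
      interpolation W V S T α z = interpolation W V S T α t :=
    eq_of_norm_le_norm_strip_interior (differentiable_interpolation W V S T α)
      (interpolation_isBigO_one_strip W V S T α) ht
      (fun _ hz => (norm_interpolation_le_of_re_eq_zero W S T hV hz).trans h0)
      (fun _ hz => (norm_interpolation_le_of_re_eq_one W S T hz).trans h1) hz
  have hzero : interpolation W V S T α 0 = W.pow 0 * (V * (S.pow 0 * T.pow (α / 2 : ℝ))) := by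
    simp [interpolation]
  have hone : interpolation W V S T α 1 =
      W.pow (1 / 2 : ℝ) * (V * S.pow (1 / 2 : ℝ)) * T.pow 0 := by
    simp [interpolation, Matrix.mul_assoc]
  rw [← hconst (z := 0) (by simp), hzero] at h0
  have hS : S.pow 0 * T.pow (α / 2 : ℝ) = T.pow (α / 2 : ℝ) := by
    refine S.pow_zero_mul_eq_of_norm_le (h0.trans ?_)
    rw [← frobenius_norm_isometry_mul hV (S.pow 0 * _)]
    exact W.frobenius_norm_pow_mul_le rfl _
  rw [hS] at h0 hzero
  rw [← frobenius_norm_isometry_mul hV] at h0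
  rw [← hconst (z := 1) (by simp), hone] at h1
  calc V * T.pow (α / 2 : ℝ) = interpolation W V S T α 0 :=
        (hzero.trans (W.pow_zero_mul_eq_of_norm_le h0)).symm
    _ = interpolation W V S T α 1 := (hconst (by simp)).trans (hconst (by simp)).symm
    _ = W.pow (1 / 2 : ℝ) * (V * S.pow (1 / 2 : ℝ)) :=
      hone.trans (T.mul_pow_zero_eq_of_norm_le h1)

theorem commute_pow_of_norm_le_norm_interpolation (hV : Vᴴ * V = 1) (hα : α ≠ 0) {t : ℝ}
    (ht : t ∈ Set.Ioo (0 : ℝ) 1)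
    (h0 : ‖T.pow (α / 2 : ℝ)‖ ≤ ‖interpolation W V S T α t‖)
    (h1 : ‖W.pow (1 / 2 : ℝ) * (V * S.pow (1 / 2 : ℝ))‖ ≤ ‖interpolation W V S T α t‖) (x y : ℂ) :
    Commute (T.pow x) (S.pow y) := by
  have hhalf : Commute (T.pow (α / 2 : ℝ)) (S.pow (1 / 2 : ℝ)) :=
    commute_of_isometry_mul_eq hV (W.isHermitian_pow_ofReal _) (T.isHermitian_pow_ofReal _)
      (S.isHermitian_pow_ofReal _)
      (isometry_mul_pow_eq_of_norm_le_norm_interpolation W S T hV ht h0 h1)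
  exact (S.commute_pow (by norm_num) (T.commute_pow (by positivity) hhalf x).symm y).symm

end Interpolation

section SandwichedTrace

open scoped Matrix.Norms.Frobenius
open Complex

variable {m n : Type*} [Fintype m] [DecidableEq m] [Fintype n] [DecidableEq n]

theorem factor_mul_conjTranspose {l : Type*} (V : Matrix l n ℂ) {S T : SpectralData n}
    {ρ : Matrix n n ℂ} {s : ℝ} (hρ : S.pow (s / 2) * T.pow 1 * S.pow (s / 2) = ρ) :
    V * (S.pow (s / 2) * T.pow (1 / 2)) * (V * (S.pow (s / 2) * T.pow (1 / 2)))ᴴ =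
      V * ρ * Vᴴ := by
  have hhalf : T.pow 1 = T.pow (1 / 2) * T.pow (1 / 2) := by rw [T.pow_mul_pow, add_halves]
  rw [← hρ, hhalf]
  simp [Matrix.mul_assoc, SpectralData.conjTranspose_pow]

variable (W : SpectralData m) {V : Matrix m n ℂ} {S T : SpectralData n} {ρ : Matrix n n ℂ} {α s : ℝ}

theorem frobenius_norm_sq_pow_half (T : SpectralData n) (x : ℝ) :
    ‖T.pow (x / 2 : ℝ)‖ ^ 2 = retr (T.pow x) := by
  rw [frobenius_norm_sq, (T.isHermitian_pow_ofReal _).eq, T.pow_mul_pow, ← ofReal_add, add_halves]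

theorem frobenius_norm_sq_weighted (W : SpectralData m) (V : Matrix m n ℂ) (S : SpectralData n) :
    ‖W.pow (1 / 2 : ℝ) * (V * S.pow (1 / 2 : ℝ))‖ ^ 2 = retr (W.pow 1 * (V * S.pow 1 * Vᴴ)) := by
  rw [W.frobenius_norm_sq_pow_mul, conjTranspose_mul, (S.isHermitian_pow_ofReal _).eq,
    Matrix.mul_assoc, S.pow_mul_pow_mul, ← Matrix.mul_assoc V]
  norm_num

theorem interpolation_ofReal_of_mul_eq_one (hs : α * (1 - s) = 1) :
    interpolation W V S T α s = W.pow (s / 2) * (V * (S.pow (s / 2) * T.pow (1 / 2))) := by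
  rw [interpolation, ← ofReal_one, ← ofReal_sub, ← ofReal_mul, hs]

theorem norm_sq_interpolation_of_mul_eq_one (hs : α * (1 - s) = 1)
    (hρ : S.pow (s / 2) * T.pow 1 * S.pow (s / 2) = ρ) :
    ‖interpolation W V S T α s‖ ^ 2 = retr (W.pow s * (V * ρ * Vᴴ)) := by
  rw [interpolation_ofReal_of_mul_eq_one W hs, W.frobenius_norm_sq_pow_mul,
    factor_mul_conjTranspose V hρ]
  norm_num [mul_div_cancel₀]

/-- For `α < 1` the point `s < 0` lies outside the strip. Cauchy–Schwarz pairs it with its mirror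
image `-s`, which lies inside when `1 / 2 < α`. -/
theorem retr_pow_le_norm_interpolation_mul (hV : Vᴴ * V = 1) (hs : α * (1 - s) = 1)
    (hρ : S.pow (s / 2) * T.pow 1 * S.pow (s / 2) = ρ) (hST : S.pow 0 * T.pow 1 = T.pow 1)
    (hWρ : retr (W.pow 0 * (V * ρ * Vᴴ)) = retr ρ) :
    retr (T.pow α) ≤ ‖interpolation W V S T α s‖ * ‖interpolation W V S T α (-s : ℝ)‖ := by
  set G := V * (S.pow (s / 2) * T.pow (1 / 2)) with hG
  have hWG : W.pow 0 * G = G := by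
    refine W.pow_zero_mul_eq_of_norm_le (le_of_eq ?_)
    rw [← sq_eq_sq₀ (norm_nonneg _) (norm_nonneg _), W.frobenius_norm_sq_pow_mul, hG,
      frobenius_norm_sq', factor_mul_conjTranspose V hρ]
    simpa [retr, trace_mul_cycle V, hV] using hWρ.symm
  have hSTα : S.pow 0 * T.pow (α - 1 / 2) = T.pow (α - 1 / 2) := by
    rw [show T.pow (α - 1 / 2) = T.pow 1 * T.pow (α - 3 / 2) by rw [T.pow_mul_pow]; ring_nf,
      ← Matrix.mul_assoc, hST]
  have hneg : interpolation W V S T α (-s : ℝ) =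
      W.pow (-(s / 2)) * (V * (S.pow (-(s / 2)) * T.pow (α - 1 / 2))) := by
    have hs' : (α * (1 - (-s : ℝ)) / 2 : ℂ) = α - 1 / 2 := by
      have := congrArg ((↑) : ℝ → ℂ) hs
      push_cast at this ⊢
      linear_combination -this / 2
    rw [interpolation, hs', ofReal_neg, neg_div]
  refine le_of_eq_of_le ?_ (retr_conjTranspose_mul_le _ _)
  rw [interpolation_ofReal_of_mul_eq_one W hs, hneg, ← hG]
  congr 1
  symm
  calc (W.pow (s / 2) * G)ᴴ * (W.pow (-(s / 2)) * (V * (S.pow (-(s / 2)) * T.pow (α - 1 / 2))))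
      = (W.pow 0 * G)ᴴ * (V * (S.pow (-(s / 2)) * T.pow (α - 1 / 2))) := by
        simp [Matrix.mul_assoc, SpectralData.conjTranspose_pow, SpectralData.pow_mul_pow_mul]
    _ = T.pow (1 / 2) * (S.pow (s / 2) * ((Vᴴ * V) * (S.pow (-(s / 2)) * T.pow (α - 1 / 2)))) := by
        rw [hWG, hG]
        simp [Matrix.mul_assoc, SpectralData.conjTranspose_pow]
    _ = T.pow α := by
        rw [hV, Matrix.one_mul, S.pow_mul_pow_mul, add_neg_cancel, hSTα, T.pow_mul_pow]
        ring_nf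

theorem commute_sandwich (hρ : S.pow (s / 2) * T.pow 1 * S.pow (s / 2) = ρ)
    (h : ∀ x y, Commute (T.pow x) (S.pow y)) : Commute ρ (S.pow 1) :=
  hρ ▸ ((S.commute_pow_pow _ _).mul_left (h _ _)).mul_left (S.commute_pow_pow _ _)

theorem retr_weighted_lt_retr_pow (hV : Vᴴ * V = 1) (hα : 1 < α) (hs : α * (1 - s) = 1)
    (hρ : S.pow (s / 2) * T.pow 1 * S.pow (s / 2) = ρ) (hcomm : ¬ Commute ρ (S.pow 1))
    (hW : retr (W.pow s * (V * ρ * Vᴴ)) = retr (W.pow 1 * (V * S.pow 1 * Vᴴ))) :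
    retr (W.pow 1 * (V * S.pow 1 * Vᴴ)) < retr (T.pow α) := by
  by_contra! hle
  have hs01 : s ∈ Set.Ioo (0 : ℝ) 1 := ⟨by nlinarith, by nlinarith⟩
  have hnorm : ‖interpolation W V S T α s‖ ^ 2 = retr (W.pow 1 * (V * S.pow 1 * Vᴴ)) :=
    (norm_sq_interpolation_of_mul_eq_one W hs hρ).trans hW
  refine hcomm (commute_sandwich hρ (commute_pow_of_norm_le_norm_interpolation W S T hV
    (by positivity) hs01 ?_ ?_)) <;> rw [← sq_le_sq₀ (norm_nonneg _) (norm_nonneg _), hnorm]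
  · rwa [frobenius_norm_sq_pow_half]
  · rw [frobenius_norm_sq_weighted]

theorem retr_pow_lt_retr_weighted (hV : Vᴴ * V = 1) (hα : 1 / 2 < α) (hα1 : α < 1)
    (hs : α * (1 - s) = 1) (hρ : S.pow (s / 2) * T.pow 1 * S.pow (s / 2) = ρ)
    (hST : S.pow 0 * T.pow 1 = T.pow 1) (hcomm : ¬ Commute ρ (S.pow 1))
    (hWρ : retr (W.pow 0 * (V * ρ * Vᴴ)) = retr ρ)
    (hW : retr (W.pow s * (V * ρ * Vᴴ)) = retr (W.pow 1 * (V * S.pow 1 * Vᴴ))) :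
    retr (T.pow α) < retr (W.pow 1 * (V * S.pow 1 * Vᴴ)) := by
  by_contra! hle
  have hs01 : -s ∈ Set.Ioo (0 : ℝ) 1 := ⟨by nlinarith, by nlinarith⟩
  have hinner := retr_pow_le_norm_interpolation_mul W hV hs hρ hST hWρ
  have hFs : ‖interpolation W V S T α s‖ = ‖W.pow (1 / 2 : ℝ) * (V * S.pow (1 / 2 : ℝ))‖ := by
    rw [← sq_eq_sq₀ (norm_nonneg _) (norm_nonneg _), frobenius_norm_sq_weighted,
      norm_sq_interpolation_of_mul_eq_one W hs hρ, hW]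
  have hWT : ‖W.pow (1 / 2 : ℝ) * (V * S.pow (1 / 2 : ℝ))‖ ≤ ‖T.pow (α / 2 : ℝ)‖ := by
    rwa [← sq_le_sq₀ (norm_nonneg _) (norm_nonneg _), frobenius_norm_sq_weighted,
      frobenius_norm_sq_pow_half]
  rw [← frobenius_norm_sq_pow_half, hFs] at hinner
  have hTF : ‖T.pow (α / 2 : ℝ)‖ ≤ ‖interpolation W V S T α (-s : ℝ)‖ := by
    by_contra! hlt
    nlinarith [norm_nonneg (interpolation W V S T α (-s : ℝ))]
  exact hcomm (commute_sandwich hρ (commute_pow_of_norm_le_norm_interpolation W S T hV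
    (by positivity) hs01 hTF (hWT.trans hTF)))

end SandwichedTrace

section Dilation

variable {κ n : Type*}

/-- The block column with blocks `B k`; it is the Naimark isometry of the POVM
`fun k => (B k)ᴴ * B k`. -/
def blockColumn (B : κ → Matrix n n ℂ) : Matrix (κ × n) n ℂ := Matrix.of fun x j => B x.1 x.2 j

variable [Fintype κ] [Fintype n] (B : κ → Matrix n n ℂ)

theorem conjTranspose_blockColumn_mul_self :
    (blockColumn B)ᴴ * blockColumn B = ∑ k, (B k)ᴴ * B k := by
  ext i j
  simp only [Matrix.mul_apply, conjTranspose_apply, blockColumn, of_apply, Fintype.sum_prod_type,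
    Matrix.sum_apply]

variable [DecidableEq κ] [DecidableEq n]

theorem conjTranspose_blockColumn_mul_diagonal_mul (f : κ → ℂ) :
    (blockColumn B)ᴴ * diagonal (fun x : κ × n => f x.1) * blockColumn B =
      ∑ k, f k • ((B k)ᴴ * B k) := by
  ext i j
  rw [Matrix.mul_apply]
  simp only [mul_diagonal, conjTranspose_apply, blockColumn, of_apply, Fintype.sum_prod_type,
    Matrix.sum_apply, Matrix.smul_apply, smul_eq_mul]
  refine Finset.sum_congr rfl fun k _ => ?_
  rw [Matrix.mul_apply, Finset.mul_sum]
  exact Finset.sum_congr rfl fun l _ => by rw [conjTranspose_apply]; ring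

theorem retr_ofDiagonal_pow_mul_blockColumn {w c : κ → ℝ} {z : ℂ}
    (hc : ∀ k, suppCPow (w k) z = c k) (A : Matrix n n ℂ) :
    retr ((SpectralData.ofDiagonal fun x : κ × n => w x.1).pow z *
      (blockColumn B * A * (blockColumn B)ᴴ)) = ∑ k, c k * retr (A * ((B k)ᴴ * B k)) := by
  have hcycle (D : Matrix (κ × n) (κ × n) ℂ) (V : Matrix (κ × n) n ℂ) :
      trace (D * (V * A * Vᴴ)) = trace (A * (Vᴴ * D * V)) := by
    rw [trace_mul_comm, Matrix.mul_assoc, Matrix.mul_assoc, trace_mul_comm]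
    simp only [Matrix.mul_assoc]
  simp only [retr, SpectralData.ofDiagonal_pow, hc]
  rw [hcycle, conjTranspose_blockColumn_mul_diagonal_mul B (fun k => (c k : ℂ))]
  simp [Matrix.mul_sum, trace_sum]

end Dilation

section ClassicalWeight

theorem rpow_div_rpow_mul {p q α : ℝ} (hp : 0 ≤ p) (hq : 0 ≤ q) (hpq : q = 0 → p = 0)
    (hα : 0 < α) : (p / q) ^ α * q = p ^ α * q ^ (1 - α) := by
  rcases hq.eq_or_lt' with rfl | hq
  · simp [hpq rfl, hα.ne']
  · rw [Real.div_rpow hp hq.le, Real.rpow_sub hq, Real.rpow_one]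
    ring

theorem rpow_div_rpow_rpow_mul {p q α s : ℝ} (hp : 0 ≤ p) (hq : 0 ≤ q) (hpq : q = 0 → p = 0)
    (hα : 0 < α) (hs : α * (1 - s) = 1) : ((p / q) ^ α) ^ s * p = (p / q) ^ α * q := by
  rcases hp.eq_or_lt' with rfl | hp
  · simp [hα.ne']
  · have hq : 0 < q := hq.lt_of_ne' fun h => hp.ne' (hpq h)
    have hexp : α = α * s + 1 := by linarith
    rw [← Real.rpow_mul (by positivity)]
    nth_rw 2 [hexp]
    rw [Real.rpow_add (by positivity), Real.rpow_one]
    field_simp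

theorem ite_rpow_div_pos_mul {p q : ℝ} (hp : 0 ≤ p) (hq : 0 ≤ q) (hpq : q = 0 → p = 0) (α : ℝ) :
    (if 0 < (p / q) ^ α then 1 else 0) * p = p := by
  rcases hp.eq_or_lt' with rfl | hp
  · rw [mul_zero]
  · have hq : 0 < q := hq.lt_of_ne' fun h => hp.ne' (hpq h)
    rw [if_pos (by positivity), one_mul]

end ClassicalWeight

section PosSemidefTrace

open scoped Matrix.Norms.Frobenius

variable {n : Type*} [Fintype n] {A B : Matrix n n ℂ}

theorem exists_eq_conjTranspose_mul_self (hA : A.PosSemidef) :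
    ∃ C : Matrix n n ℂ, A = Cᴴ * C := by
  classical
  open scoped MatrixOrder in exact CStarAlgebra.nonneg_iff_eq_star_mul_self.1 hA.nonneg

theorem retr_conjTranspose_mul_self_mul (C D : Matrix n n ℂ) :
    retr (Cᴴ * C * (Dᴴ * D)) = ‖C * Dᴴ‖ ^ 2 := by
  rw [frobenius_norm_sq', conjTranspose_mul, conjTranspose_conjTranspose, retr, Matrix.mul_assoc,
    trace_mul_comm]
  simp only [Matrix.mul_assoc, retr]

theorem retr_nonneg (hA : A.PosSemidef) : 0 ≤ retr A :=
  (Complex.le_def.1 hA.trace_nonneg).1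

theorem retr_mul_nonneg (hA : A.PosSemidef) (hB : B.PosSemidef) : 0 ≤ retr (A * B) := by
  obtain ⟨C, rfl⟩ := exists_eq_conjTranspose_mul_self hA
  obtain ⟨D, rfl⟩ := exists_eq_conjTranspose_mul_self hB
  exact retr_conjTranspose_mul_self_mul C D ▸ sq_nonneg _

theorem retr_mul_le (hA : A.PosSemidef) (hB : B.PosSemidef) : retr (A * B) ≤ retr A * retr B := by
  obtain ⟨C, rfl⟩ := exists_eq_conjTranspose_mul_self hA
  obtain ⟨D, rfl⟩ := exists_eq_conjTranspose_mul_self hB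
  rw [retr_conjTranspose_mul_self_mul, ← frobenius_norm_sq, ← frobenius_norm_sq, ← mul_pow]
  gcongr
  exact (frobenius_norm_mul _ _).trans_eq (by rw [frobenius_norm_conjTranspose])

theorem retr_sandwich_mul (C A B : Matrix n n ℂ) :
    retr (C * A * C * B) = retr (A * (C * B * C)) := by
  rw [retr, Matrix.mul_assoc, Matrix.mul_assoc, trace_mul_comm]
  simp only [retr, Matrix.mul_assoc]

end PosSemidefTrace

section Sandwich

variable {n : Type*} [Fintype n] [DecidableEq n] {ρ σ : Matrix n n ℂ}

theorem mul_pow_zero_of_support_le {S : SpectralData n}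
    (hsupp : ∀ v, S.pow 1 *ᵥ v = 0 → ρ *ᵥ v = 0) : ρ * S.pow 0 = ρ := by
  refine Matrix.toLin'.injective (LinearMap.ext fun v => ?_)
  have hker : S.pow 1 *ᵥ (S.pow 0 *ᵥ v - v) = 0 := by
    rw [mulVec_sub, mulVec_mulVec, S.pow_mul_pow, add_zero, sub_self]
  have := hsupp _ hker
  rwa [mulVec_sub, mulVec_mulVec, sub_eq_zero] at this

theorem pow_mul_sandwich_mul_pow {S : SpectralData n} (hρ : ρ.IsHermitian)
    (hsupp : ∀ v, S.pow 1 *ᵥ v = 0 → ρ *ᵥ v = 0) (r : ℂ) :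
    S.pow r * (S.pow (-r) * ρ * S.pow (-r)) * S.pow r = ρ := by
  have hright := mul_pow_zero_of_support_le hsupp
  have hleft : S.pow 0 * ρ = ρ := by
    simpa [hρ.eq, S.conjTranspose_pow] using congrArg conjTranspose hright
  calc _ = S.pow r * S.pow (-r) * ρ * (S.pow (-r) * S.pow r) := by simp only [Matrix.mul_assoc]
    _ = ρ := by rw [S.pow_mul_pow, S.pow_mul_pow, add_neg_cancel, neg_add_cancel, hleft, hright]

theorem posSemidef_sandwich (hρ : ρ.PosSemidef) (S : SpectralData n) (r : ℝ) :
    (S.pow r * ρ * S.pow r).PosSemidef := by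
  simpa [(S.isHermitian_pow_ofReal r).eq] using hρ.mul_mul_conjTranspose_same (S.pow r)

end Sandwich

/-- The constant is the trace of `σ ^ (-1/2) * ρ * σ ^ (-1/2)`. -/
theorem exists_retr_mul_le_of_support_le {n : Type*} [Fintype n] {ρ σ : Matrix n n ℂ}
    (hρ : ρ.PosSemidef) (hσ : σ.PosSemidef) (hsupp : ∀ v, σ *ᵥ v = 0 → ρ *ᵥ v = 0) :
    ∃ c, ∀ R : Matrix n n ℂ, R.PosSemidef → retr (ρ * R) ≤ c * retr (σ * R) := by
  classical
  obtain ⟨S, rfl⟩ : ∃ S : SpectralData n, S.pow 1 = σ :=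
    ⟨_, SpectralData.ofIsHermitian_pow_one hσ⟩
  set r : ℝ := 1 / 2 with hr
  obtain ⟨Y, hY, hYρ⟩ : ∃ Y : Matrix n n ℂ, Y.PosSemidef ∧ S.pow r * Y * S.pow r = ρ :=
    ⟨_, posSemidef_sandwich hρ S (-r),
      by simpa using pow_mul_sandwich_mul_pow hρ.isHermitian hsupp r⟩
  refine ⟨retr Y, fun R hR => ?_⟩
  calc retr (ρ * R) = retr (Y * (S.pow r * R * S.pow r)) := by rw [← hYρ, retr_sandwich_mul]
    _ ≤ retr Y * retr (S.pow r * R * S.pow r) := retr_mul_le hY (posSemidef_sandwich hR S r)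
    _ = retr Y * retr (S.pow 1 * R) := by
        congr 1
        rw [retr, trace_mul_cycle, S.pow_mul_pow, ← Complex.ofReal_add, hr, add_halves,
          Complex.ofReal_one, retr]

theorem retr_mul_eq_zero_of_support_le {n : Type*} [Fintype n] {ρ σ R : Matrix n n ℂ}
    (hρ : ρ.PosSemidef) (hσ : σ.PosSemidef) (hsupp : ∀ v, σ *ᵥ v = 0 → ρ *ᵥ v = 0)
    (hR : R.PosSemidef) (h : retr (σ * R) = 0) : retr (ρ * R) = 0 := by
  obtain ⟨c, hc⟩ := exists_retr_mul_le_of_support_le hρ hσ hsupp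
  exact ((hc R hR).trans_eq (mul_eq_zero_of_right c h)).antisymm (retr_mul_nonneg hρ hR)

section OptimalMeasurement

variable {κ n : Type*} [Fintype κ] [Fintype n]

/-- The summand contributed to the classical Rényi sum of order `α` by a POVM element `R`. -/
def renyiTerm (α : ℝ) (ρ σ R : Matrix n n ℂ) : ℝ := retr (ρ * R) ^ α * retr (σ * R) ^ (1 - α)

/-- The trace `Tr[(σ^{(1-α)/(2α)} ρ σ^{(1-α)/(2α)})^α]` defining the sandwiched Rényi divergence. -/
def sandwichedTrace [DecidableEq n] (α : ℝ) (ρ σ : Matrix n n ℂ) : ℝ :=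
  retr ((σ.rpowH ((1 - α) / (2 * α)) * ρ * σ.rpowH ((1 - α) / (2 * α))).rpowH α)

variable {α s : ℝ} {ρ σ : Matrix n n ℂ}

theorem exists_spectralData_sandwichedTrace [DecidableEq n] (hρ : ρ.PosSemidef) (hσ : σ.PosSemidef)
    (hsupp : ∀ v, σ *ᵥ v = 0 → ρ *ᵥ v = 0) (hα : 0 < α) (hα1 : α ≠ 1) (hs : α * (1 - s) = 1) :
    ∃ S T : SpectralData n, S.pow 1 = σ ∧ S.pow (s / 2) * T.pow 1 * S.pow (s / 2) = ρ ∧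
      S.pow 0 * T.pow 1 = T.pow 1 ∧ retr (T.pow α) = sandwichedTrace α ρ σ := by
  let S := SpectralData.ofIsHermitian hσ.isHermitian
  have hS : S.pow 1 = σ := SpectralData.ofIsHermitian_pow_one hσ
  have hexp : (1 - α) / (2 * α) = -(s / 2) := by
    rw [div_eq_iff (by positivity)]
    linarith
  have hs0 : -(s / 2) ≠ 0 := hexp ▸ div_ne_zero (sub_ne_zero.2 hα1.symm) (by positivity)
  have hSpow : σ.rpowH ((1 - α) / (2 * α)) = S.pow (-(s / 2) : ℝ) := by
    rw [hexp]
    exact (SpectralData.ofIsHermitian_pow_ofReal hσ hs0).symm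
  have hX := posSemidef_sandwich hρ S (-(s / 2))
  refine ⟨S, .ofIsHermitian hX.isHermitian, hS, ?_, ?_, ?_⟩
  · rw [SpectralData.ofIsHermitian_pow_one hX]
    simpa using pow_mul_sandwich_mul_pow hρ.isHermitian (S := S) (by rwa [hS]) (s / 2)
  · rw [SpectralData.ofIsHermitian_pow_one hX, ← Matrix.mul_assoc, ← Matrix.mul_assoc,
      S.pow_mul_pow, zero_add]
  · rw [SpectralData.ofIsHermitian_pow_ofReal hX hα.ne', sandwichedTrace, hSpow]

open scoped Matrix.Norms.Frobenius in
theorem sandwichedTrace_pos [DecidableEq n] (hρ : ρ.PosSemidef) (hσ : σ.PosSemidef) (hρ0 : ρ ≠ 0)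
    (hsupp : ∀ v, σ *ᵥ v = 0 → ρ *ᵥ v = 0) (hα : 0 < α) (hα1 : α ≠ 1) :
    0 < sandwichedTrace α ρ σ := by
  obtain ⟨s, hs⟩ : ∃ s, α * (1 - s) = 1 := ⟨1 - α⁻¹, by field_simp; ring⟩
  obtain ⟨S, T, -, hST, -, hT⟩ := exists_spectralData_sandwichedTrace hρ hσ hsupp hα hα1 hs
  rw [← hT, ← frobenius_norm_sq_pow_half]
  refine sq_pos_of_pos (norm_pos_iff.2 fun h => hρ0 ?_)
  have hT1 : T.pow 1 = 0 := by
    rw [← sub_add_cancel 1 ((α / 2 : ℝ) : ℂ), ← T.pow_mul_pow, h, Matrix.mul_zero]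
  rw [← hST, hT1, Matrix.mul_zero, Matrix.zero_mul]

/-- The weights `w k = (p k / q k) ^ α`, where `p` and `q` are the outcome distributions, are
optimal in the variational formula for the classical Rényi sum. -/
theorem exists_dilation_sum_renyiTerm (hρ : ρ.PosSemidef) (hσ : σ.PosSemidef)
    (hsupp : ∀ v, σ *ᵥ v = 0 → ρ *ᵥ v = 0) (hα : 0 < α) (hα1 : α ≠ 1) (hs : α * (1 - s) = 1)
    [DecidableEq κ] [DecidableEq n]
    {P : κ → Matrix n n ℂ} (hP : ∀ k, (P k).PosSemidef) (hsum : ∑ k, P k = 1) :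
    ∃ (V : Matrix (κ × n) n ℂ) (W : SpectralData (κ × n)), Vᴴ * V = 1 ∧
      retr (W.pow 1 * (V * σ * Vᴴ)) = ∑ k, renyiTerm α ρ σ (P k) ∧
      retr (W.pow s * (V * ρ * Vᴴ)) = ∑ k, renyiTerm α ρ σ (P k) ∧
      retr (W.pow 0 * (V * ρ * Vᴴ)) = retr ρ := by
  choose B hB using fun k => exists_eq_conjTranspose_mul_self (hP k)
  set p := fun k => retr (ρ * P k)
  set q := fun k => retr (σ * P k)
  have hp k : 0 ≤ p k := retr_mul_nonneg hρ (hP k)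
  have hq k : 0 ≤ q k := retr_mul_nonneg hσ (hP k)
  have hpq k : q k = 0 → p k = 0 := retr_mul_eq_zero_of_support_le hρ hσ hsupp (hP k)
  set w : κ → ℝ := fun k => (p k / q k) ^ α
  have hw k : 0 ≤ w k := Real.rpow_nonneg (div_nonneg (hp k) (hq k)) α
  have hs0 : s ≠ 0 := by
    rintro rfl
    exact hα1 (by linarith)
  have hterm k : w k * q k = renyiTerm α ρ σ (P k) := rpow_div_rpow_mul (hp k) (hq k) (hpq k) hα
  refine ⟨blockColumn B, .ofDiagonal fun x => w x.1, ?_, ?_, ?_, ?_⟩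
  · simp only [conjTranspose_blockColumn_mul_self, ← hB, hsum]
  · rw [retr_ofDiagonal_pow_mul_blockColumn B (c := w) fun k => by
      simpa using suppCPow_ofReal (hw k) one_ne_zero]
    simp only [← hB]
    exact Finset.sum_congr rfl fun k _ => hterm k
  · rw [retr_ofDiagonal_pow_mul_blockColumn B fun k => suppCPow_ofReal (hw k) hs0]
    simp only [← hB]
    exact Finset.sum_congr rfl fun k _ =>
      (rpow_div_rpow_rpow_mul (hp k) (hq k) (hpq k) hα hs).trans (hterm k)
  · rw [retr_ofDiagonal_pow_mul_blockColumn B (c := fun k => if 0 < w k then 1 else 0) fun k => by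
      rw [suppCPow]; split_ifs <;> simp]
    simp only [← hB]
    rw [Finset.sum_congr rfl fun k _ => ite_rpow_div_pos_mul (hp k) (hq k) (hpq k) α]
    simp [p, retr, ← Complex.re_sum, ← trace_sum, ← Matrix.mul_sum, hsum]

theorem sum_renyiTerm_lt_sandwichedTrace [DecidableEq n] (hρ : ρ.PosSemidef) (hσ : σ.PosSemidef)
    (hsupp : ∀ v, σ *ᵥ v = 0 → ρ *ᵥ v = 0) (hcomm : ¬Commute ρ σ) (hα : 1 < α)
    {P : κ → Matrix n n ℂ} (hP : ∀ k, (P k).PosSemidef) (hsum : ∑ k, P k = 1) :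
    ∑ k, renyiTerm α ρ σ (P k) < sandwichedTrace α ρ σ := by
  classical
  obtain ⟨s, hs⟩ : ∃ s, α * (1 - s) = 1 := ⟨1 - α⁻¹, by field_simp; ring⟩
  obtain ⟨S, T, rfl, hST, -, hT⟩ :=
    exists_spectralData_sandwichedTrace hρ hσ hsupp (by linarith) hα.ne' hs
  obtain ⟨V, W, hV, hWσ, hWρ, -⟩ :=
    exists_dilation_sum_renyiTerm hρ hσ hsupp (by linarith) hα.ne' hs hP hsum
  rw [← hT, ← hWσ]
  exact retr_weighted_lt_retr_pow W hV hα hs hST hcomm (hWρ.trans hWσ.symm)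

theorem sandwichedTrace_lt_sum_renyiTerm [DecidableEq n] (hρ : ρ.PosSemidef) (hσ : σ.PosSemidef)
    (hsupp : ∀ v, σ *ᵥ v = 0 → ρ *ᵥ v = 0) (hcomm : ¬Commute ρ σ) (hα : 1 / 2 < α) (hα1 : α < 1)
    {P : κ → Matrix n n ℂ} (hP : ∀ k, (P k).PosSemidef) (hsum : ∑ k, P k = 1) :
    sandwichedTrace α ρ σ < ∑ k, renyiTerm α ρ σ (P k) := by
  classical
  obtain ⟨s, hs⟩ : ∃ s, α * (1 - s) = 1 := ⟨1 - α⁻¹, by field_simp; ring⟩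
  obtain ⟨S, T, rfl, hST, hsuppT, hT⟩ :=
    exists_spectralData_sandwichedTrace hρ hσ hsupp (by linarith) hα1.ne hs
  obtain ⟨V, W, hV, hWσ, hWρ, hW0⟩ :=
    exists_dilation_sum_renyiTerm hρ hσ hsupp (by linarith) hα1.ne hs hP hsum
  rw [← hT, ← hWσ]
  exact retr_pow_lt_retr_weighted W hV hα hα1 hs hST hsuppT hcomm hW0 (hWρ.trans hWσ.symm)

end OptimalMeasurement

section ConvexHull

variable {E : Type*} [AddCommGroup E] [Module ℝ E] [FiniteDimensional ℝ E] {K : Set E}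

theorem exists_fin_sum_eq_of_mem_convexHull {x : E} (hx : x ∈ convexHull ℝ K) :
    ∃ k < Module.finrank ℝ E + 2, ∃ w ∈ stdSimplex ℝ (Fin k), ∃ z : Fin k → E,
      (∀ i, z i ∈ K) ∧ ∑ i, w i • z i = x := by
  obtain ⟨κ, _, z, w, hz, hindep, hw, hw1, rfl⟩ := eq_pos_convex_span_of_mem_convexHull hx
  let e := (Fintype.equivFin κ).symm
  have hcard : Fintype.card κ ≤ Module.finrank ℝ E + 1 :=
    hindep.card_le_finrank_succ.trans (Nat.succ_le_succ (Submodule.finrank_le _))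
  refine ⟨Fintype.card κ, Nat.lt_succ_of_le hcard, w ∘ e, ⟨fun i => (hw _).le, ?_⟩, z ∘ e,
    fun i => hz ⟨e i, rfl⟩, e.sum_comp fun i => w i • z i⟩
  rw [← hw1]
  exact e.sum_comp w

theorem isCompact_convexHull [TopologicalSpace E] [ContinuousAdd E] [ContinuousSMul ℝ E]
    (hK : IsCompact K) : IsCompact (convexHull ℝ K) := by
  let combine (k : ℕ) (p : (Fin k → ℝ) × (Fin k → E)) : E := ∑ i, p.1 i • p.2 i
  have hunion : convexHull ℝ K = ⋃ k ∈ Set.Iio (Module.finrank ℝ E + 2),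
      combine k '' (stdSimplex ℝ (Fin k) ×ˢ Set.univ.pi fun _ => K) := by
    refine Set.Subset.antisymm (fun x hx => ?_) (Set.iUnion₂_subset fun k _ => ?_)
    · obtain ⟨k, hk, w, hw, z, hz, rfl⟩ := exists_fin_sum_eq_of_mem_convexHull hx
      exact Set.mem_biUnion hk ⟨(w, z), ⟨hw, fun i _ => hz i⟩, rfl⟩
    · rintro _ ⟨⟨w, z⟩, ⟨hw, hz⟩, rfl⟩
      exact mem_convexHull_of_exists_fintype w z hw.1 hw.2 (fun i => hz i trivial) rfl
  rw [hunion]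
  refine (Set.finite_Iio _).isCompact_biUnion fun k _ => ?_
  exact ((isCompact_stdSimplex ℝ _).prod (isCompact_univ_pi fun _ => hK)).image (by fun_prop)

end ConvexHull

section TraceSlice

variable {n : Type*} [Fintype n]

/-- The compact base `{R ≥ 0 | Tr R = d}` of the cone of positive semidefinite matrices. -/
def traceSlice (n : Type*) [Fintype n] (d : ℝ) : Set (Matrix n n ℂ) :=
  {R | R.PosSemidef ∧ retr R = d}

@[fun_prop]
theorem continuous_retr : Continuous (retr : Matrix n n ℂ → ℝ) := by
  unfold retr
  fun_prop

theorem retr_smul (c : ℝ) (A : Matrix n n ℂ) : retr (c • A) = c * retr A := by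
  simp [retr]

theorem retr_sum {κ : Type*} [Fintype κ] (P : κ → Matrix n n ℂ) :
    retr (∑ k, P k) = ∑ k, retr (P k) := by
  simp [retr, trace_sum]

theorem eq_zero_of_retr_eq_zero {P : Matrix n n ℂ} (hP : P.PosSemidef) (h : retr P = 0) :
    P = 0 :=
  hP.trace_eq_zero_iff.1 (Complex.ext h (Complex.le_def.1 hP.trace_nonneg).2.symm)

open scoped Matrix.Norms.Frobenius in
theorem isCompact_traceSlice (d : ℝ) : IsCompact (traceSlice n d) := by
  have : ProperSpace (Matrix n n ℂ) := FiniteDimensional.proper ℂ _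
  have himage : traceSlice n d = (fun B => Bᴴ * B) '' {B : Matrix n n ℂ | retr (Bᴴ * B) = d} := by
    ext R
    constructor
    · rintro ⟨hR, hRd⟩
      obtain ⟨B, rfl⟩ := exists_eq_conjTranspose_mul_self hR
      exact ⟨B, hRd, rfl⟩
    · rintro ⟨B, hB, rfl⟩
      exact ⟨posSemidef_conjTranspose_mul_self B, hB⟩
  rw [himage]
  refine (Metric.isCompact_of_isClosed_isBounded ?_ ?_).image (by fun_prop)
  · exact isClosed_eq (by fun_prop) continuous_const
  · refine (Metric.isBounded_closedBall (x := 0) (r := √d)).subset fun B hB => ?_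
    rw [mem_closedBall_zero_iff]
    exact Real.le_sqrt_of_sq_le ((frobenius_norm_sq B).trans hB).le

theorem exists_mem_traceSlice_smul_eq {d : ℝ} (hd : 0 < d) (hne : (traceSlice n d).Nonempty)
    {P : Matrix n n ℂ} (hP : P.PosSemidef) : ∃ R ∈ traceSlice n d, (retr P / d) • R = P := by
  rcases (retr_nonneg hP).eq_or_lt' with h | h
  · obtain ⟨R, hR⟩ := hne
    exact ⟨R, hR, by rw [h, zero_div, zero_smul, eq_zero_of_retr_eq_zero hP h]⟩
  · refine ⟨(d / retr P) • P, ⟨hP.smul (by positivity), ?_⟩, ?_⟩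
    · rw [retr_smul, div_mul_cancel₀ _ h.ne']
    · rw [smul_smul, div_mul_div_cancel₀ hd.ne', div_self h.ne', one_smul]

variable {g : Matrix n n ℂ → ℝ}

theorem mem_convexHull_graphOn_traceSlice_iff
    (hhom : ∀ (c : ℝ) (R : Matrix n n ℂ), 0 ≤ c → R.PosSemidef → g (c • R) = c * g R)
    {A : Matrix n n ℂ} (hA : 0 < retr A) {t : ℝ} :
    (A, t) ∈ convexHull ℝ ((traceSlice n (retr A)).graphOn g) ↔
      ∃ (k : ℕ) (P : Fin k → Matrix n n ℂ),
        (∀ i, (P i).PosSemidef) ∧ ∑ i, P i = A ∧ ∑ i, g (P i) = t := by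
  constructor
  · intro h
    obtain ⟨k, -, w, hw, z, hz, hsum⟩ := exists_fin_sum_eq_of_mem_convexHull h
    choose R hR hRz using hz
    obtain rfl : (fun i => (R i, g (R i))) = z := funext hRz
    rw [Prod.ext_iff, Prod.fst_sum, Prod.snd_sum] at hsum
    refine ⟨k, fun i => w i • R i, fun i => (hR i).1.smul (hw.1 i), hsum.1, ?_⟩
    refine Eq.trans ?_ hsum.2
    exact Finset.sum_congr rfl fun i _ => hhom _ _ (hw.1 i) (hR i).1
  · rintro ⟨k, P, hP, rfl, rfl⟩
    have hne : (traceSlice n (retr (∑ i, P i))).Nonempty :=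
      ⟨_, posSemidef_sum _ fun i _ => hP i, rfl⟩
    choose R hR hRP using fun i => exists_mem_traceSlice_smul_eq hA hne (hP i)
    have hw i : 0 ≤ retr (P i) / retr (∑ i, P i) := div_nonneg (retr_nonneg (hP i)) hA.le
    refine mem_convexHull_of_exists_fintype _ (fun i => (R i, g (R i))) hw ?_
      (fun i => Set.mem_image_of_mem _ (hR i)) (Prod.ext ?_ ?_)
    · rw [← Finset.sum_div, ← retr_sum, div_self hA.ne']
    · simp only [Prod.fst_sum, Prod.smul_fst, hRP]
    · simp only [Prod.snd_sum, Prod.smul_snd, smul_eq_mul, ← hhom _ _ (hw _) (hR _).1, hRP]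

theorem exists_decomposition_forall_sum_le
    (hhom : ∀ (c : ℝ) (R : Matrix n n ℂ), 0 ≤ c → R.PosSemidef → g (c • R) = c * g R)
    {A : Matrix n n ℂ} (hA : A.PosSemidef) (hA0 : 0 < retr A)
    (hcont : ContinuousOn g (traceSlice n (retr A))) :
    ∃ (k : ℕ) (P : Fin k → Matrix n n ℂ), (∀ i, (P i).PosSemidef) ∧ ∑ i, P i = A ∧
      ∀ (l : ℕ) (Q : Fin l → Matrix n n ℂ), (∀ i, (Q i).PosSemidef) → ∑ i, Q i = A →
        ∑ i, g (Q i) ≤ ∑ i, g (P i) := by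
  let values := {t | (A, t) ∈ convexHull ℝ ((traceSlice n (retr A)).graphOn g)}
  have hcompact : IsCompact values := by
    have hgraph : IsCompact ((traceSlice n (retr A)).graphOn g) :=
      (isCompact_traceSlice _).image_of_continuousOn (continuousOn_id.prodMk hcont)
    have hhull := isCompact_convexHull hgraph
    exact (hhull.image continuous_snd).of_isClosed_subset
      (hhull.isClosed.preimage (Continuous.prodMk_right A)) fun t ht => ⟨_, ht, rfl⟩
  have hne : values.Nonempty := ⟨g A, (mem_convexHull_graphOn_traceSlice_iff hhom hA0).2
    ⟨1, fun _ => A, fun _ => hA, by simp, by simp⟩⟩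
  obtain ⟨t, ht, hmax⟩ := hcompact.exists_isMaxOn hne continuousOn_id
  obtain ⟨k, P, hP, hPA, rfl⟩ := (mem_convexHull_graphOn_traceSlice_iff hhom hA0).1 ht
  exact ⟨k, P, hP, hPA, fun l Q hQ hQA =>
    hmax ((mem_convexHull_graphOn_traceSlice_iff hhom hA0).2 ⟨l, Q, hQ, hQA, rfl⟩)⟩

end TraceSlice

section RenyiTerm

theorem continuousOn_rpow_mul_rpow_cone {α : ℝ} (hα : 0 < α) (c : ℝ) :
    ContinuousOn (fun x : ℝ × ℝ => x.1 ^ α * x.2 ^ (1 - α))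
      {x | 0 ≤ x.1 ∧ 0 ≤ x.2 ∧ x.1 ≤ c * x.2} := by
  rintro ⟨p, q⟩ ⟨hp, hq, hpq⟩
  have hcont : ContinuousAt (fun x : ℝ × ℝ => x.1 ^ α) (p, q) :=
    continuousAt_fst.rpow_const (.inr hα.le)
  rcases hq.eq_or_lt' with rfl | hq
  · obtain rfl : p = 0 := by simp at hp hpq; linarith
    have hbound (x : ℝ × ℝ) (hx : 0 ≤ x.1 ∧ 0 ≤ x.2 ∧ x.1 ≤ c * x.2) :
        x.1 ^ α * x.2 ^ (1 - α) ≤ |c| ^ α * x.2 := by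
      obtain ⟨h1, h2, h12⟩ := hx
      rw [← rpow_div_rpow_mul h1 h2 (fun h => by simp [h] at h12; linarith) hα]
      gcongr
      exact div_le_of_le_mul₀ h2 (abs_nonneg c) (h12.trans (by gcongr; exact le_abs_self c))
    have hlim : Filter.Tendsto (fun x : ℝ × ℝ => |c| ^ α * x.2) (nhdsWithin (0, 0)
        {x | 0 ≤ x.1 ∧ 0 ≤ x.2 ∧ x.1 ≤ c * x.2}) (nhds 0) := by
      refine (Continuous.tendsto' (by fun_prop) _ _ ?_).mono_left nhdsWithin_le_nhds
      simp
    rw [ContinuousWithinAt, Real.zero_rpow hα.ne', zero_mul]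
    refine tendsto_of_tendsto_of_tendsto_of_le_of_le' tendsto_const_nhds hlim ?_ ?_ <;>
      filter_upwards [self_mem_nhdsWithin] with x hx
    · exact mul_nonneg (Real.rpow_nonneg hx.1 _) (Real.rpow_nonneg hx.2.1 _)
    · exact hbound x hx
  · exact (hcont.mul (continuousAt_snd.rpow_const (.inl hq.ne'))).continuousWithinAt

variable {n : Type*} [Fintype n] {α : ℝ} {ρ σ : Matrix n n ℂ}

theorem renyiTerm_smul (hρ : ρ.PosSemidef) (hσ : σ.PosSemidef) (hα : α ≠ 0) (c : ℝ)
    (R : Matrix n n ℂ) (hc : 0 ≤ c) (hR : R.PosSemidef) :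
    renyiTerm α ρ σ (c • R) = c * renyiTerm α ρ σ R := by
  have hcα : c ^ α * c ^ (1 - α) = c := by
    rcases hc.eq_or_lt' with rfl | hc
    · rw [Real.zero_rpow hα, zero_mul]
    · rw [← Real.rpow_add hc, add_sub_cancel, Real.rpow_one]
  rw [renyiTerm, renyiTerm, Matrix.mul_smul, Matrix.mul_smul, retr_smul, retr_smul,
    Real.mul_rpow hc (retr_mul_nonneg hρ hR), Real.mul_rpow hc (retr_mul_nonneg hσ hR),
    mul_mul_mul_comm, hcα]

theorem continuousOn_renyiTerm (hρ : ρ.PosSemidef) (hσ : σ.PosSemidef)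
    (hsupp : ∀ v, σ *ᵥ v = 0 → ρ *ᵥ v = 0) (hα : 0 < α) :
    ContinuousOn (renyiTerm α ρ σ) {R | R.PosSemidef} := by
  obtain ⟨c, hc⟩ := exists_retr_mul_le_of_support_le hρ hσ hsupp
  have hpair : Continuous fun R : Matrix n n ℂ => (retr (ρ * R), retr (σ * R)) := by fun_prop
  exact (continuousOn_rpow_mul_rpow_cone hα c).comp hpair.continuousOn fun R hR =>
    ⟨retr_mul_nonneg hρ hR, retr_mul_nonneg hσ hR, hc R hR⟩

theorem sum_renyiTerm_pos [DecidableEq n] (hρ : ρ.PosSemidef) (hσ : σ.PosSemidef) (hρ0 : ρ ≠ 0)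
    (hsupp : ∀ v, σ *ᵥ v = 0 → ρ *ᵥ v = 0) {κ : Type*} [Fintype κ]
    {P : κ → Matrix n n ℂ} (hP : ∀ k, (P k).PosSemidef) (hsum : ∑ k, P k = 1) :
    0 < ∑ k, renyiTerm α ρ σ (P k) := by
  have hp k : 0 ≤ retr (ρ * P k) := retr_mul_nonneg hρ (hP k)
  have hq k : 0 ≤ retr (σ * P k) := retr_mul_nonneg hσ (hP k)
  have htotal : ∑ k, retr (ρ * P k) ≠ 0 := by
    rw [← retr_sum, ← Matrix.mul_sum, hsum, Matrix.mul_one]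
    exact fun h => hρ0 (eq_zero_of_retr_eq_zero hρ h)
  obtain ⟨k, -, hk⟩ := Finset.exists_ne_zero_of_sum_ne_zero htotal
  have hqk : retr (σ * P k) ≠ 0 :=
    mt (retr_mul_eq_zero_of_support_le hρ hσ hsupp (hP k)) hk
  refine Finset.sum_pos' (fun i _ => ?_) ⟨k, Finset.mem_univ k, ?_⟩
  · exact mul_nonneg (Real.rpow_nonneg (hp i) _) (Real.rpow_nonneg (hq i) _)
  · exact mul_pos (Real.rpow_pos_of_pos ((hp k).lt_of_ne' hk) _)
      (Real.rpow_pos_of_pos ((hq k).lt_of_ne' hqk) _)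

end RenyiTerm

theorem mul_log_lt_mul_log_iff {a x y : ℝ} (hx : 0 < x) (hy : 0 < y) :
    a * Real.log x < a * Real.log y ↔ a * x < a * y := by
  rcases lt_trichotomy a 0 with ha | rfl | ha
  · rw [mul_lt_mul_left_of_neg ha, mul_lt_mul_left_of_neg ha, Real.log_lt_log_iff hy hx]
  · simp
  · rw [mul_lt_mul_iff_right₀ ha, mul_lt_mul_iff_right₀ ha, Real.log_lt_log_iff hx hy]

section MeasuredRenyiDiv

variable {n : Type*} [Fintype n] {ρ σ : Matrix n n ℂ} {α : ℝ}

theorem renyiDivE_retr_eq (hρ : ρ.PosSemidef) (hσ : σ.PosSemidef)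
    (hsupp : ∀ v, σ *ᵥ v = 0 → ρ *ᵥ v = 0) {k : ℕ} {P : Fin k → Matrix n n ℂ}
    (hP : ∀ i, (P i).PosSemidef) :
    renyiDivE α (fun i => retr (ρ * P i)) (fun i => retr (σ * P i)) =
      ((α - 1)⁻¹ * Real.log (∑ i, renyiTerm α ρ σ (P i)) : ℝ) :=
  if_pos (.inr fun i => retr_mul_eq_zero_of_support_le hρ hσ hsupp (hP i))

theorem exists_povm_measuredRenyiDiv_le [DecidableEq n] (hρ : ρ.PosSemidef) (hσ : σ.PosSemidef)
    (hρ0 : ρ ≠ 0) (hsupp : ∀ v, σ *ᵥ v = 0 → ρ *ᵥ v = 0) (hα : 0 < α) :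
    ∃ (k : ℕ) (P : Fin k → Matrix n n ℂ), (∀ i, (P i).PosSemidef) ∧ ∑ i, P i = 1 ∧
      measuredRenyiDiv α ρ σ ≤ ((α - 1)⁻¹ * Real.log (∑ i, renyiTerm α ρ σ (P i)) : ℝ) := by
  have : Nonempty n := not_isEmpty_iff.1 fun _ => hρ0 (Subsingleton.elim _ _)
  have hhom (c : ℝ) (R : Matrix n n ℂ) (hc : 0 ≤ c) (hR : R.PosSemidef) :
      (α - 1)⁻¹ * renyiTerm α ρ σ (c • R) = c * ((α - 1)⁻¹ * renyiTerm α ρ σ R) := by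
    rw [renyiTerm_smul hρ hσ hα.ne' c R hc hR, mul_left_comm]
  have hcont : ContinuousOn (fun R => (α - 1)⁻¹ * renyiTerm α ρ σ R)
      (traceSlice n (retr (1 : Matrix n n ℂ))) :=
    continuousOn_const.mul
      ((continuousOn_renyiTerm hρ hσ hsupp hα).mono fun R hR => hR.1)
  have htrace : 0 < retr (1 : Matrix n n ℂ) := by simp [retr, Fintype.card_pos]
  obtain ⟨k, P, hP, hPsum, hmax⟩ :=
    exists_decomposition_forall_sum_le hhom PosSemidef.one htrace hcont
  refine ⟨k, P, hP, hPsum, iSup₂_le fun l Q => iSup₂_le fun hQ hQsum => ?_⟩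
  have hle := hmax l Q hQ hQsum
  rw [← Finset.mul_sum, ← Finset.mul_sum, ← not_lt] at hle
  rw [renyiDivE_retr_eq hρ hσ hsupp hQ, EReal.coe_le_coe_iff, ← not_lt]
  rwa [mul_log_lt_mul_log_iff (sum_renyiTerm_pos hρ hσ hρ0 hsupp hP hPsum)
    (sum_renyiTerm_pos hρ hσ hρ0 hsupp hQ hQsum)]

end MeasuredRenyiDiv

theorem measured_lt_sandwiched_of_not_commute_general {n : Type*} [Fintype n] [DecidableEq n]
    {ρ σ : Matrix n n ℂ} (hρ : ρ.PosSemidef) (hσ : σ.PosSemidef)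
    (hsupp : ∀ v, σ *ᵥ v = 0 → ρ *ᵥ v = 0) (hcomm : ¬Commute ρ σ) {α : ℝ}
    (hα : (1 / 2 < α ∧ α < 1) ∨ 1 < α) :
    measuredRenyiDiv α ρ σ < (sandwichedRenyiDiv α ρ σ : EReal) := by
  have hρ0 : ρ ≠ 0 := fun h => hcomm (h ▸ Commute.zero_left σ)
  have hα0 : 0 < α := by rcases hα with ⟨h, -⟩ | h <;> linarith
  have hα1 : α ≠ 1 := by rcases hα with ⟨-, h⟩ | h <;> [exact h.ne; exact h.ne']
  obtain ⟨k, P, hP, hsum, hle⟩ := exists_povm_measuredRenyiDiv_le hρ hσ hρ0 hsupp hα0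
  refine hle.trans_lt (EReal.coe_lt_coe_iff.2 ?_)
  refine (mul_log_lt_mul_log_iff (sum_renyiTerm_pos hρ hσ hρ0 hsupp hP hsum)
    (sandwichedTrace_pos hρ hσ hρ0 hsupp hα0 hα1)).2 ?_
  rcases hα with ⟨hα, hα1⟩ | hα
  · exact mul_lt_mul_of_neg_left
      (sandwichedTrace_lt_sum_renyiTerm hρ hσ hsupp hcomm hα hα1 hP hsum)
      (inv_lt_zero.2 (by linarith))
  · exact mul_lt_mul_of_pos_left
      (sum_renyiTerm_lt_sandwichedTrace hρ hσ hsupp hcomm hα hP hsum)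
      (inv_pos.2 (by linarith))

/-- strict inequality between measured and sandwiched for
non-commuting states. For density operators with `supp ρ ⊆ supp σ`, `ρσ ≠ σρ`,
and `α ∈ (1/2,1) ∪ (1,∞)`: `D_α^𝕄(ρ‖σ) < D_α^*(ρ‖σ)`. -/
theorem measured_lt_sandwiched_of_not_commute
    {ι : Type*} [Fintype ι] [DecidableEq ι]
    (ρ σ : Matrix ι ι ℂ)
    (hρ : ρ.PosSemidef) (hρtr : ρ.trace = 1)
    (hσ : σ.PosSemidef) (hσtr : σ.trace = 1)
    (hsupp : ∀ v : ι → ℂ, σ.mulVec v = 0 → ρ.mulVec v = 0)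
    (hcomm : ρ * σ ≠ σ * ρ)
    (α : ℝ) (hα : (1 / 2 < α ∧ α < 1) ∨ 1 < α) :
    measuredRenyiDiv α ρ σ < ((sandwichedRenyiDiv α ρ σ : ℝ) : EReal) := by
  exact measured_lt_sandwiched_of_not_commute_general hρ hσ hsupp hcomm hα

end
end

section
/- Let ρ be a density operator and σ a positive definite density operator on a finite-dimensional complex Hilbert space, let α > 1, and let T be a positive semidefinite operator. Then (Tr[(T^{α/2} ρ^α T^{α/2})^{1/α}])^α ≤ Tr[ρ^α σ^{1−α}] · (Tr[(T^{α/2} σ^{α−1} T^{α/2})^{1/(α−1)}])^{α−1}. -/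
open Matrix
open scoped ComplexOrder Kronecker

noncomputable section

/-- The operator absolute value `|A| = (A† A)^(1/2)`. -/
def Matrix.absM {ι : Type*} [Fintype ι] [DecidableEq ι] (A : Matrix ι ι ℂ) :
    Matrix ι ι ℂ :=
  Matrix.rpowH (Aᴴ * A) (2⁻¹ : ℝ)

/-!
Put `R = ρ ^ α`, `K = σ ^ (α - 1)`, `Z = Xᴴ R X` and `W = Xᴴ K X`, where `X = T ^ (α / 2)`; the
inequality splits as
`Tr[Z ^ (1 / α)] ^ α ≤ Tr[Z W⁻¹] · Tr[W ^ (1 / (α - 1))] ^ (α - 1)` and `Tr[Z W⁻¹] ≤ Tr[R K⁻¹]`,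
with inverses taken on supports.

For the first, expand every trace over pairs of eigenvectors of `Z` and `W`: with the transition
probabilities as common weights it becomes the scalar Hölder inequality, and `ker W ≤ ker Z`
takes care of the vanishing eigenvalues of `W`. For the second, `Tr[Z W⁻¹] = Tr[R N]` with
`N = X W⁻¹ Xᴴ`. Since `N K N = N`, pairing `R` with the positive matrix
`(K⁻¹ - N) K (K⁻¹ - N)` gives exactly `Tr[R K⁻¹] - Tr[R N]`.
-/

namespace PetzHolder

section WeightedHolder

variable {κ : Type*} (s : Finset κ)

lemma rpow_sum_mul_le {c f : κ → ℝ} (hc : ∀ x, 0 ≤ c x) (hf : ∀ x, 0 ≤ f x) {p : ℝ}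
    (hp : 1 ≤ p) :
    (∑ x ∈ s, c x * f x) ^ p ≤ (∑ x ∈ s, c x * f x ^ p) * (∑ x ∈ s, c x) ^ (p - 1) := by
  have hp₀ : 0 < p := by linarith
  have hcf : 0 ≤ ∑ x ∈ s, c x * f x := Finset.sum_nonneg fun x _ ↦ mul_nonneg (hc x) (hf x)
  have hcf' : 0 ≤ ∑ x ∈ s, c x * f x ^ p :=
    Finset.sum_nonneg fun x _ ↦ mul_nonneg (hc x) (Real.rpow_nonneg (hf x) p)
  have hc' : 0 ≤ ∑ x ∈ s, c x := Finset.sum_nonneg fun x _ ↦ hc x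
  have hexp : (1 - p⁻¹) * p = p - 1 := by field_simp
  calc (∑ x ∈ s, c x * f x) ^ p
      ≤ ((∑ x ∈ s, c x) ^ (1 - p⁻¹) * (∑ x ∈ s, c x * f x ^ p) ^ p⁻¹) ^ p :=
        Real.rpow_le_rpow hcf (Real.inner_le_weight_mul_Lp_of_nonneg s hp c f hc hf) hp₀.le
    _ = (∑ x ∈ s, c x * f x ^ p) * (∑ x ∈ s, c x) ^ (p - 1) := by
        rw [Real.mul_rpow (Real.rpow_nonneg hc' _) (Real.rpow_nonneg hcf' _),
          Real.rpow_inv_rpow hcf' hp₀.ne', ← Real.rpow_mul hc', hexp, mul_comm]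

lemma rpow_sum_mul_rpow_inv_le {c z w : κ → ℝ} (hc : ∀ x, 0 ≤ c x) (hz : ∀ x, 0 ≤ z x)
    (hw : ∀ x, 0 ≤ w x) (hsupp : ∀ x, w x = 0 → c x = 0 ∨ z x = 0) {α : ℝ} (hα : 1 < α) :
    (∑ x ∈ s, c x * z x ^ α⁻¹) ^ α ≤
      (∑ x ∈ s, c x * (z x * (w x)⁻¹)) * (∑ x ∈ s, c x * w x ^ (α - 1)⁻¹) ^ (α - 1) := by
  have hα₀ : 0 < α := by linarith
  have hα₁ : 0 < α - 1 := by linarith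
  set u : κ → ℝ := fun x ↦ c x * w x ^ (α - 1)⁻¹
  set f : κ → ℝ := fun x ↦ z x ^ α⁻¹ * w x ^ (-(α - 1)⁻¹)
  have hu (x : κ) : 0 ≤ u x := mul_nonneg (hc x) (Real.rpow_nonneg (hw x) _)
  have hf (x : κ) : 0 ≤ f x := mul_nonneg (Real.rpow_nonneg (hz x) _) (Real.rpow_nonneg (hw x) _)
  have hmean (x : κ) : u x * f x = c x * z x ^ α⁻¹ := by
    rcases (hw x).eq_or_lt with hwx | hwx
    · rcases hsupp x hwx.symm with h | h <;> simp [u, f, h, hα₀.ne']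
    · simp only [u, f, Real.rpow_neg hwx.le]
      field_simp
  have hmoment (x : κ) : u x * f x ^ α = c x * (z x * (w x)⁻¹) := by
    rcases (hw x).eq_or_lt with hwx | hwx
    · simp [u, ← hwx, hα₁.ne']
    · have hexp : (α - 1)⁻¹ + -(α - 1)⁻¹ * α = -1 := by field_simp; ring
      rw [Real.mul_rpow (Real.rpow_nonneg (hz x) _) (Real.rpow_nonneg hwx.le _),
        Real.rpow_inv_rpow (hz x) hα₀.ne', ← Real.rpow_mul hwx.le, ← Real.rpow_neg_one (w x),
        ← hexp, Real.rpow_add hwx]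
      ring
  simpa only [hmean, hmoment] using rpow_sum_mul_le s hu hf hα.le

end WeightedHolder

section Kernel

lemma mul_eq_zero_of_ker_le {R l m n k : Type*} [CommSemiring R] [Fintype m]
    {A : Matrix k m R} {B : Matrix l m R} {M : Matrix m n R}
    (hker : LinearMap.ker B.mulVecLin ≤ LinearMap.ker A.mulVecLin) (hBM : B * M = 0) :
    A * M = 0 := by
  ext i j
  have hcol : B *ᵥ M.col j = 0 := funext fun l ↦ congrFun₂ hBM l j
  exact congrFun (hker hcol) i

lemma mul_mul_eq_self_of_ker_le {R k l m : Type*} [CommRing R] [Fintype m] [Fintype l]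
    {A : Matrix k m R} {B : Matrix l m R} {G : Matrix m l R}
    (hker : LinearMap.ker B.mulVecLin ≤ LinearMap.ker A.mulVecLin) (hBGB : B * G * B = B) :
    A * (G * B) = A := by
  classical
  have hB : B * (1 - G * B) = 0 := by
    rw [Matrix.mul_sub, Matrix.mul_one, ← Matrix.mul_assoc, hBGB, sub_self]
  have hA : A * (1 - G * B) = 0 := mul_eq_zero_of_ker_le hker hB
  rwa [Matrix.mul_sub, Matrix.mul_one, sub_eq_zero, eq_comm] at hA

variable {𝕜 m n : Type*} [RCLike 𝕜] [Fintype m] [Fintype n]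

lemma ker_conjTranspose_mul_mul_le {R K : Matrix m m 𝕜} (hK : K.PosSemidef)
    (hker : LinearMap.ker K.mulVecLin ≤ LinearMap.ker R.mulVecLin) (X : Matrix m n 𝕜) :
    LinearMap.ker (Xᴴ * K * X).mulVecLin ≤ LinearMap.ker (Xᴴ * R * X).mulVecLin := by
  intro v hv
  simp only [LinearMap.mem_ker, mulVecLin_apply, ← mulVec_mulVec] at hv ⊢
  have hquad : star (X *ᵥ v) ⬝ᵥ (K *ᵥ (X *ᵥ v)) = 0 := by
    rw [star_mulVec, ← dotProduct_mulVec, hv, dotProduct_zero]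
  have hRXv : R *ᵥ (X *ᵥ v) = 0 := hker ((hK.dotProduct_mulVec_zero_iff _).1 hquad)
  rw [hRXv, mulVec_zero]

end Kernel

section Trace

variable {𝕜 m n : Type*} [RCLike 𝕜] [Fintype m] [Fintype n]

open scoped MatrixOrder in
lemma trace_mul_nonneg {A B : Matrix m m 𝕜} (hA : A.PosSemidef) (hB : B.PosSemidef) :
    0 ≤ (A * B).trace := by
  classical
  obtain ⟨C, rfl⟩ := CStarAlgebra.nonneg_iff_eq_star_mul_self.mp hA.nonneg
  rw [star_eq_conjTranspose, Matrix.mul_assoc, trace_mul_comm]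
  exact (hB.mul_mul_conjTranspose_same C).trace_nonneg

lemma trace_mul_conj_le_of_generalized_inverse {R K G : Matrix m m 𝕜} {P : Matrix n n 𝕜}
    {X : Matrix m n 𝕜} (hR : R.PosSemidef) (hK : K.PosSemidef) (hG : G.IsHermitian)
    (hP : P.IsHermitian) (hGKG : G * K * G = G) (hRGK : R * (G * K) = R)
    (hPKP : P * (Xᴴ * K * X) * P = P) :
    (R * (X * P * Xᴴ)).trace ≤ (R * G).trace := by
  set N := X * P * Xᴴ
  have hN : N.IsHermitian := isHermitian_mul_mul_conjTranspose X hP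
  have hNKN : N * K * N = N := by
    calc N * K * N = X * (P * (Xᴴ * K * X) * P) * Xᴴ := by simp only [N, Matrix.mul_assoc]
      _ = N := by rw [hPKP]
  have hKGR : K * G * R = R := by
    simpa only [conjTranspose_mul, hR.1.eq, hK.1.eq, hG.eq] using congrArg conjTranspose hRGK
  have hcross : (R * (N * K * G)).trace = (R * N).trace := by
    rw [trace_mul_comm, Matrix.mul_assoc, Matrix.mul_assoc, ← Matrix.mul_assoc K, hKGR,
      trace_mul_comm]
  have hexpand : R * ((G - N) * K * (G - N)) = R * G - R * (N * K * G) := by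
    calc R * ((G - N) * K * (G - N))
        = R * (G * K * G) - R * (N * K * G) - R * (G * K) * N + R * (N * K * N) := by noncomm_ring
      _ = R * G - R * (N * K * G) := by rw [hGKG, hNKN, hRGK]; abel
  have hpos : 0 ≤ (R * ((G - N) * K * (G - N))).trace := by
    refine trace_mul_nonneg hR ?_
    simpa only [(hG.sub hN).eq] using hK.mul_mul_conjTranspose_same (G - N)
  rwa [hexpand, trace_sub, hcross, sub_nonneg] at hpos

end Trace

section FunctionalCalculus

variable {𝕜 ι : Type*} [RCLike 𝕜] [Fintype ι] [DecidableEq ι] {A B : Matrix ι ι 𝕜}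

open scoped MatrixOrder in
lemma nonneg_of_mem_spectrum (hA : A.PosSemidef) {x : ℝ} (hx : x ∈ spectrum ℝ A) : 0 ≤ x :=
  spectrum_nonneg_of_nonneg hA.nonneg hx

lemma cfc_mul_cfc (f g : ℝ → ℝ) (A : Matrix ι ι 𝕜) :
    cfc f A * cfc g A = cfc (fun x ↦ f x * g x) A :=
  (cfc_mul f g A (A.finite_real_spectrum.continuousOn f)
    (A.finite_real_spectrum.continuousOn g)).symm

/-- The transition probability `|⟨eᵢ, fⱼ⟩|²` between the chosen eigenbases `e` of `A` and `f` of
`B`. These are the weights of the joint (Nussbaum–Szkoła) distribution that turns traces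
`Tr[f(A) g(B)]` into classical sums. -/
def eigenvectorOverlap (hA : A.IsHermitian) (hB : B.IsHermitian) (i j : ι) : ℝ :=
  ‖(star (hA.eigenvectorUnitary : Matrix ι ι 𝕜) * (hB.eigenvectorUnitary : Matrix ι ι 𝕜)) i j‖ ^ 2

lemma eigenvectorOverlap_nonneg (hA : A.IsHermitian) (hB : B.IsHermitian) (i j : ι) :
    0 ≤ eigenvectorOverlap hA hB i j :=
  sq_nonneg _

lemma ofReal_eigenvectorOverlap (hA : A.IsHermitian) (hB : B.IsHermitian) (i j : ι) :
    (eigenvectorOverlap hA hB i j : 𝕜) =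
      (star (hA.eigenvectorUnitary : Matrix ι ι 𝕜) * (hB.eigenvectorUnitary : Matrix ι ι 𝕜)) i j *
        star ((star (hA.eigenvectorUnitary : Matrix ι ι 𝕜) *
          (hB.eigenvectorUnitary : Matrix ι ι 𝕜)) i j) := by
  rw [eigenvectorOverlap, RCLike.star_def, RCLike.mul_conj, RCLike.ofReal_pow]

lemma trace_cfc_mul_cfc (hA : A.IsHermitian) (hB : B.IsHermitian) (f g : ℝ → ℝ) :
    (cfc f A * cfc g B).trace =
      ((∑ i, ∑ j, eigenvectorOverlap hA hB i j *
        (f (hA.eigenvalues i) * g (hB.eigenvalues j)) : ℝ) : 𝕜) := by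
  rw [hA.cfc_eq, hB.cfc_eq, IsHermitian.cfc, IsHermitian.cfc, Unitary.conjStarAlgAut_apply,
    Unitary.conjStarAlgAut_apply]
  set U := (hA.eigenvectorUnitary : Matrix ι ι 𝕜)
  set V := (hB.eigenvectorUnitary : Matrix ι ι 𝕜)
  set D := diagonal (RCLike.ofReal ∘ f ∘ hA.eigenvalues : ι → 𝕜)
  set E := diagonal (RCLike.ofReal ∘ g ∘ hB.eigenvalues : ι → 𝕜)
  calc (U * D * star U * (V * E * star V)).trace
      = (D * (star U * V) * E * star (star U * V)).trace := by
        simp only [star_mul, star_star, Matrix.mul_assoc]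
        rw [trace_mul_comm]
        simp only [Matrix.mul_assoc]
    _ = _ := by
        rw [trace, RCLike.ofReal_sum]
        refine Finset.sum_congr rfl fun i _ ↦ ?_
        rw [diag_apply, mul_apply, RCLike.ofReal_sum]
        refine Finset.sum_congr rfl fun j _ ↦ ?_
        rw [RCLike.ofReal_mul, RCLike.ofReal_mul, ofReal_eigenvectorOverlap, mul_diagonal,
          diagonal_mul, star_apply, Function.comp_apply, Function.comp_apply, Function.comp_apply,
          Function.comp_apply]
        ring

lemma eigenvectorOverlap_eq_zero_or_eigenvalues_eq_zero (hA : A.PosSemidef) (hB : B.IsHermitian)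
    (hker : LinearMap.ker B.mulVecLin ≤ LinearMap.ker A.mulVecLin) (i : ι) {j : ι}
    (hj : hB.eigenvalues j = 0) :
    eigenvectorOverlap hA.1 hB i j = 0 ∨ hA.1.eigenvalues i = 0 := by
  set g : ℝ → ℝ := fun x ↦ if x = 0 then 1 else 0
  have hBg : B * cfc g B = 0 := by
    have hmul := cfc_mul_cfc id g B
    rw [cfc_id ℝ B hB.isSelfAdjoint] at hmul
    have hzero : (fun x ↦ id x * g x) = 0 := by
      ext x
      by_cases hx : x = 0 <;> simp [g, hx]
    rw [hmul, hzero, cfc_zero]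
  have hsum : ∑ i, ∑ j, eigenvectorOverlap hA.1 hB i j *
      (hA.1.eigenvalues i * g (hB.eigenvalues j)) = 0 := by
    have htrace := trace_cfc_mul_cfc hA.1 hB id g
    rw [cfc_id ℝ A hA.1.isSelfAdjoint, mul_eq_zero_of_ker_le hker hBg, trace_zero] at htrace
    exact_mod_cast htrace.symm
  have hterm (i j : ι) : 0 ≤ eigenvectorOverlap hA.1 hB i j *
      (hA.1.eigenvalues i * g (hB.eigenvalues j)) :=
    mul_nonneg (eigenvectorOverlap_nonneg ..)
      (mul_nonneg (hA.eigenvalues_nonneg i) (by simp only [g]; split_ifs <;> norm_num))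
  rw [Finset.sum_eq_zero_iff_of_nonneg fun i _ ↦ Finset.sum_nonneg fun j _ ↦ hterm i j] at hsum
  have hi := (Finset.sum_eq_zero_iff_of_nonneg fun j _ ↦ hterm i j).1
    (hsum i (Finset.mem_univ i)) j (Finset.mem_univ j)
  simpa [g, hj] using hi

end FunctionalCalculus

section RealPower

variable {ι : Type*} [Fintype ι] [DecidableEq ι] {A : Matrix ι ι ℂ}

lemma rpowH_eq_cfc (A : Matrix ι ι ℂ) (p : ℝ) : rpowH A p = cfc (fun x : ℝ ↦ x ^ p) A := by
  by_cases hA : A.IsHermitian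
  · rw [rpowH, dif_pos hA, hA.cfc_eq, IsHermitian.cfc, Unitary.conjStarAlgAut_apply]
    rfl
  · rw [rpowH, dif_neg hA, cfc_apply_of_not_predicate A (p := IsSelfAdjoint) hA]

lemma rpowH_isHermitian (A : Matrix ι ι ℂ) (p : ℝ) : (rpowH A p).IsHermitian := by
  rw [rpowH_eq_cfc]
  exact cfc_predicate _ A

open scoped MatrixOrder in
lemma rpowH_posSemidef (hA : A.PosSemidef) (p : ℝ) : (rpowH A p).PosSemidef := by
  rw [rpowH_eq_cfc, ← nonneg_iff_posSemidef]
  exact cfc_nonneg fun x hx ↦ Real.rpow_nonneg (nonneg_of_mem_spectrum hA hx) p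

lemma rpowH_zero (hA : A.IsHermitian) : rpowH A 0 = 1 := by
  simpa only [rpowH_eq_cfc, Real.rpow_zero] using cfc_const_one ℝ A hA.isSelfAdjoint

lemma rpowH_one (hA : A.IsHermitian) : rpowH A 1 = A := by
  simpa only [rpowH_eq_cfc, Real.rpow_one] using cfc_id' ℝ A hA.isSelfAdjoint

lemma rpowH_mul_rpowH (hA : A.PosSemidef) {p q : ℝ} (hpq : p + q ≠ 0) :
    rpowH A p * rpowH A q = rpowH A (p + q) := by
  simp only [rpowH_eq_cfc, cfc_mul_cfc]
  exact cfc_congr fun x hx ↦ (Real.rpow_add' (nonneg_of_mem_spectrum hA hx) hpq).symm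

lemma rpowH_mul_rpowH_neg_mul_rpowH (hA : A.PosSemidef) (p : ℝ) :
    rpowH A p * rpowH A (-p) * rpowH A p = rpowH A p := by
  simp only [rpowH_eq_cfc, cfc_mul_cfc]
  refine cfc_congr fun x hx ↦ ?_
  simp only [Real.rpow_neg (nonneg_of_mem_spectrum hA hx), mul_inv_mul_cancel]

lemma ker_rpowH (hA : A.PosSemidef) {p : ℝ} (hp : p ≠ 0) :
    LinearMap.ker (rpowH A p).mulVecLin = LinearMap.ker A.mulVecLin := by
  have hleft : rpowH A (1 - p) * rpowH A p = A := by
    rw [rpowH_mul_rpowH hA (by simp), sub_add_cancel, rpowH_one hA.1]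
  have hright : rpowH A (p - 1) * A = rpowH A p := by
    simpa only [rpowH_one hA.1, sub_add_cancel] using
      rpowH_mul_rpowH hA (p := p - 1) (q := 1) (by simpa using hp)
  apply le_antisymm
  · conv_rhs => rw [← hleft, mulVecLin_mul]
    exact LinearMap.ker_le_ker_comp _ _
  · rw [← hright, mulVecLin_mul]
    exact LinearMap.ker_le_ker_comp _ _

lemma retr_rpowH_nonneg (hA : A.PosSemidef) (p : ℝ) : 0 ≤ retr (rpowH A p) :=
  (Complex.le_def.1 (rpowH_posSemidef hA p).trace_nonneg).1

lemma retr_rpowH_mul_rpowH {B : Matrix ι ι ℂ} (hA : A.IsHermitian) (hB : B.IsHermitian)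
    (p q : ℝ) :
    retr (rpowH A p * rpowH B q) = ∑ x : ι × ι, eigenvectorOverlap hA hB x.1 x.2 *
      (hA.eigenvalues x.1 ^ p * hB.eigenvalues x.2 ^ q) := by
  rw [Fintype.sum_prod_type, retr, rpowH_eq_cfc, rpowH_eq_cfc, trace_cfc_mul_cfc hA hB]
  exact Complex.ofReal_re _

lemma retr_rpowH_inv_rpow_le {Z W : Matrix ι ι ℂ} (hZ : Z.PosSemidef) (hW : W.PosSemidef)
    (hker : LinearMap.ker W.mulVecLin ≤ LinearMap.ker Z.mulVecLin) {α : ℝ} (hα : 1 < α) :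
    retr (rpowH Z α⁻¹) ^ α ≤
      retr (Z * rpowH W (-1)) * retr (rpowH W (α - 1)⁻¹) ^ (α - 1) := by
  have hleft := retr_rpowH_mul_rpowH hZ.1 hW.1 α⁻¹ 0
  have hmid := retr_rpowH_mul_rpowH hZ.1 hW.1 1 (-1)
  have hright := retr_rpowH_mul_rpowH hZ.1 hW.1 0 (α - 1)⁻¹
  simp only [rpowH_zero hZ.1, rpowH_zero hW.1, rpowH_one hZ.1, Real.rpow_zero,
    Real.rpow_one, Real.rpow_neg_one, mul_one, one_mul] at hleft hmid hright
  have hoverlap (x : ι × ι) := eigenvectorOverlap_nonneg hZ.1 hW.1 x.1 x.2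
  have hz (x : ι × ι) := hZ.eigenvalues_nonneg x.1
  have hw (x : ι × ι) := hW.eigenvalues_nonneg x.2
  have hsupp (x : ι × ι) := eigenvectorOverlap_eq_zero_or_eigenvalues_eq_zero hZ hW.1 hker x.1
    (j := x.2)
  simpa only [hleft, hmid, hright] using
    rpow_sum_mul_rpow_inv_le Finset.univ hoverlap hz hw hsupp hα

end RealPower

end PetzHolder

open PetzHolder

theorem petz_holder_inequality_general {ι κ : Type*} [Fintype ι] [DecidableEq ι] [Fintype κ]
    [DecidableEq κ] {ρ σ : Matrix ι ι ℂ} (hρ : ρ.PosSemidef) (hσ : σ.PosSemidef)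
    (hker : LinearMap.ker σ.mulVecLin ≤ LinearMap.ker ρ.mulVecLin) {α : ℝ} (hα : 1 < α)
    (X : Matrix ι κ ℂ) :
    retr (rpowH (Xᴴ * rpowH ρ α * X) α⁻¹) ^ α ≤
      retr (rpowH ρ α * rpowH σ (1 - α)) *
        retr (rpowH (Xᴴ * rpowH σ (α - 1) * X) (α - 1)⁻¹) ^ (α - 1) := by
  have hα₁ : α - 1 ≠ 0 := by linarith
  set R := rpowH ρ α
  set K := rpowH σ (α - 1)
  set G := rpowH σ (1 - α)
  have hR : R.PosSemidef := rpowH_posSemidef hρ α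
  have hK : K.PosSemidef := rpowH_posSemidef hσ (α - 1)
  have hKR : LinearMap.ker K.mulVecLin ≤ LinearMap.ker R.mulVecLin := by
    rwa [ker_rpowH hσ hα₁, ker_rpowH hρ (by linarith)]
  have hZ : (Xᴴ * R * X).PosSemidef := hR.conjTranspose_mul_mul_same X
  have hW : (Xᴴ * K * X).PosSemidef := hK.conjTranspose_mul_mul_same X
  have hGKG : G * K * G = G := by
    simpa only [neg_sub] using rpowH_mul_rpowH_neg_mul_rpowH hσ (1 - α)
  have hRGK : R * (G * K) = R := mul_mul_eq_self_of_ker_le hKR <| by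
    simpa only [neg_sub] using rpowH_mul_rpowH_neg_mul_rpowH hσ (α - 1)
  set P := rpowH (Xᴴ * K * X) (-1)
  have hPKP : P * (Xᴴ * K * X) * P = P := by
    simpa only [neg_neg, rpowH_one hW.1] using rpowH_mul_rpowH_neg_mul_rpowH hW (-1)
  have htrace : retr (Xᴴ * R * X * P) ≤ retr (R * G) := by
    have hcycle : (Xᴴ * R * X * P).trace = (R * (X * P * Xᴴ)).trace := by
      rw [Matrix.mul_assoc, Matrix.mul_assoc, trace_mul_comm, Matrix.mul_assoc, Matrix.mul_assoc]
    rw [retr, hcycle]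
    exact (Complex.le_def.1 (trace_mul_conj_le_of_generalized_inverse hR hK
      (rpowH_isHermitian ..) (rpowH_isHermitian ..) hGKG hRGK hPKP)).1
  exact (retr_rpowH_inv_rpow_le hZ hW (ker_conjTranspose_mul_mul_le hK hKR X) hα).trans
    (mul_le_mul_of_nonneg_right htrace (Real.rpow_nonneg (retr_rpowH_nonneg hW _) _))

/-- Hölder-type inequality underlying the Petz–Rényi variational
expression. For a density operator `ρ`, a positive definite density operator `σ`,
`α > 1`, and a positive semidefinite `T`:
`(Tr[(T^{α/2} ρ^α T^{α/2})^{1/α}])^α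
  ≤ Tr[ρ^α σ^{1-α}] · (Tr[(T^{α/2} σ^{α-1} T^{α/2})^{1/(α-1)}])^{α-1}`. -/
theorem petz_holder_inequality
    {ι : Type*} [Fintype ι] [DecidableEq ι]
    (ρ σ : Matrix ι ι ℂ)
    (hρ : ρ.PosSemidef) (hρtr : ρ.trace = 1)
    (hσ : σ.PosDef) (hσtr : σ.trace = 1)
    (α : ℝ) (hα : 1 < α)
    (T : Matrix ι ι ℂ) (hT : T.PosSemidef) :
    (retr (Matrix.rpowH
        (Matrix.rpowH T (α / 2) * Matrix.rpowH ρ α * Matrix.rpowH T (α / 2)) α⁻¹)) ^ α ≤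
      retr (Matrix.rpowH ρ α * Matrix.rpowH σ (1 - α)) *
        (retr (Matrix.rpowH
          (Matrix.rpowH T (α / 2) * Matrix.rpowH σ (α - 1) * Matrix.rpowH T (α / 2))
          (α - 1)⁻¹)) ^ (α - 1) := by
  have hker : LinearMap.ker σ.mulVecLin ≤ LinearMap.ker ρ.mulVecLin :=
    (LinearMap.ker_eq_bot.2 (mulVec_injective_of_isUnit hσ.isUnit)).trans_le bot_le
  simpa only [(rpowH_isHermitian T (α / 2)).eq] using
    petz_holder_inequality_general hρ hσ.posSemidef hker hα (rpowH T (α / 2))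

end
end
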